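/- Let A = (A_1,…,A_n) be a nonnegative vector in ℝ^n, D = n + A_1 + ⋯ + A_n, 1 ≤ p < D, and p_* = Dp/(D−p). Then for every continuously differentiable function u : ℝ^n → ℝ with compact support, ( ∫_{ℝ^n} x^A |u|^{p_*} dx )^{1/p_*} ≤ K ( ∫_{ℝ^n} x^A |∇u|^p dx )^{1/p}, where the integrals are over all of ℝ^n, K = 2^{1/D} C_{p,n,A} if 1 ≤ p < D/2, and K = C_{p,n,A} if D/2 ≤ p < D. -/

import Mathlib

open MeasureTheory Real Filter

noncomputable section

/-- The positivity region `ℝ^n_A = {x : x_i > 0 whenever A_i > 0}`. -/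
def monSet {ι : Type*} [Fintype ι] (A : ι → ℝ) : Set (EuclideanSpace ℝ ι) :=
  {x | ∀ i, 0 < A i → 0 < x i}

/-- The monomial weight `x^A = ∏ |x_i|^{A_i}`. -/
def monWeight {ι : Type*} [Fintype ι] (A : ι → ℝ) (x : EuclideanSpace ℝ ι) : ℝ :=
  ∏ i, |x i| ^ A i

/-- The homogeneous dimension `D = n + A_1 + ⋯ + A_n`. -/
def monDim {ι : Type*} [Fintype ι] (A : ι → ℝ) : ℝ :=
  (Fintype.card ι : ℝ) + ∑ i, A i

/-- `k = #{i : A_i > 0}`. -/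
def monK {ι : Type*} [Fintype ι] (A : ι → ℝ) : ℕ :=
  Nat.card {i : ι // 0 < A i}

/-- `Π(A) = [ (∏ Γ((A_i+1)/2)) / 2^k ]^{2/D}`. -/
def monPi {ι : Type*} [Fintype ι] (A : ι → ℝ) : ℝ :=
  ((∏ i, Gamma ((A i + 1) / 2)) / 2 ^ monK A) ^ (2 / monDim A)

/-- `C_{1,n,A}`, the sharp constant for `p = 1`. -/
def monC1 {ι : Type*} [Fintype ι] (A : ι → ℝ) : ℝ :=
  (monDim A)⁻¹ *
    ((2 ^ monK A * Gamma (1 + monDim A / 2)) / ∏ i, Gamma ((A i + 1) / 2)) ^ (1 / monDim A)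

/-- `C_{p,n,A}`, the sharp constant for `1 ≤ p < D`. -/
def monCp {ι : Type*} [Fintype ι] (A : ι → ℝ) (p : ℝ) : ℝ :=
  if p = 1 then monC1 A
  else
    monC1 A * monDim A ^ (1 - 1 / p - 1 / monDim A) *
      ((p - 1) / (monDim A - p)) ^ (1 / (p / (p - 1))) *
      (p / (p - 1) * Gamma (monDim A) /
        (Gamma (monDim A / p) * Gamma (monDim A / (p / (p - 1))))) ^ (1 / monDim A)

section PrekopaLeindler

open Set
open scoped ENNReal NNReal Topology Pointwise

/-- One-dimensional Brunn–Minkowski inequality. -/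
lemma volume_add_volume_le_of_add_mem {A B S : Set ℝ} (hA : MeasurableSet A)
    (hB : MeasurableSet B) (hA0 : A.Nonempty) (hB0 : B.Nonempty)
    (h : ∀ a ∈ A, ∀ b ∈ B, a + b ∈ S) : volume A + volume B ≤ volume S := by
  have compact_case : ∀ K L : Set ℝ, K ⊆ A → L ⊆ B → IsCompact K → IsCompact L → K.Nonempty →
      L.Nonempty → volume K + volume L ≤ volume S := by
    intro K L hKA hLB hK hL hK0 hL0
    obtain ⟨a, haK, ha⟩ := hK.exists_isGreatest hK0
    obtain ⟨b, hbL, hb⟩ := hL.exists_isLeast hL0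
    have e1 : volume ((fun x => x + (-b)) ⁻¹' K) = volume K := measure_preimage_add_right _ _ _
    have e2 : volume ((fun x => x + (-a)) ⁻¹' L) = volume L := measure_preimage_add_right _ _ _
    rw [← e1, ← e2, ← measure_union₀]
    · apply measure_mono
      rintro x (hx | hx)
      · have := h _ (hKA hx) _ (hLB hbL)
        simpa using this
      · have := h _ (hKA haK) _ (hLB hx)
        simpa using this
    · exact (hL.measurableSet.preimage (measurable_id.add_const _)).nullMeasurableSet
    · refine measure_mono_null (t := {a + b}) ?_ (by simp)
      rintro x ⟨hx1, hx2⟩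
      have h1 := ha hx1
      have h2 := hb hx2
      simp only [mem_singleton_iff]
      linarith
  obtain ⟨a, ha⟩ := hA0
  obtain ⟨b, hb⟩ := hB0
  have key : ∀ K L : Set ℝ, K ⊆ A → L ⊆ B → IsCompact K → IsCompact L →
      volume K + volume L ≤ volume S := by
    intro K L hKA hLB hK hL
    refine le_trans ?_ (compact_case (K ∪ {a}) (L ∪ {b}) (union_subset hKA (by simpa))
      (union_subset hLB (by simpa)) (hK.union isCompact_singleton) (hL.union isCompact_singleton)
      ⟨a, by simp⟩ ⟨b, by simp⟩)
    gcongr <;> exact subset_union_left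
  rw [hA.measure_eq_iSup_isCompact, hB.measure_eq_iSup_isCompact]
  have hne : Nonempty {K : Set ℝ // K ⊆ A ∧ IsCompact K} := ⟨⟨∅, by simp⟩⟩
  have hne' : Nonempty {K : Set ℝ // K ⊆ B ∧ IsCompact K} := ⟨⟨∅, by simp⟩⟩
  have r1 : (⨆ K, ⨆ (_ : K ⊆ A), ⨆ (_ : IsCompact K), volume K)
      = ⨆ K : {K : Set ℝ // K ⊆ A ∧ IsCompact K}, volume K.1 := by
    simp only [iSup_subtype, iSup_and]
  have r2 : (⨆ K, ⨆ (_ : K ⊆ B), ⨆ (_ : IsCompact K), volume K)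
      = ⨆ K : {K : Set ℝ // K ⊆ B ∧ IsCompact K}, volume K.1 := by
    simp only [iSup_subtype, iSup_and]
  rw [r1, r2]
  exact ENNReal.iSup_add_iSup_le fun K L => key K.1 L.1 K.2.1 L.2.1 K.2.2 L.2.2

/-- Layer cake formula for functions with values in `[0, ∞]`. -/
lemma lintegral_eq_lintegral_ofReal_lt {α : Type*} [MeasurableSpace α] (μ : Measure α)
    [SFinite μ] {f : α → ℝ≥0∞} (hf : Measurable f) :
    ∫⁻ x, f x ∂μ = ∫⁻ s in Ioi (0 : ℝ), μ {x | ENNReal.ofReal s < f x} := by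
  have hm : MeasurableSet {z : α × ℝ | ENNReal.ofReal z.2 < f z.1} :=
    measurableSet_lt (ENNReal.measurable_ofReal.comp measurable_snd) (hf.comp measurable_fst)
  have h1 : ∀ x, f x = ∫⁻ s in Ioi (0 : ℝ), {z : α × ℝ | ENNReal.ofReal z.2 < f z.1}.indicator
      (fun _ => 1) (x, s) := by
    intro x
    have : ∀ s, {z : α × ℝ | ENNReal.ofReal z.2 < f z.1}.indicator (fun _ => (1 : ℝ≥0∞)) (x, s)
        = {s : ℝ | ENNReal.ofReal s < f x}.indicator (fun _ => 1) s := fun s => rfl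
    simp only [this]
    rw [lintegral_indicator_const (measurableSet_lt ENNReal.measurable_ofReal measurable_const),
      one_mul, Measure.restrict_apply
        (measurableSet_lt ENNReal.measurable_ofReal measurable_const)]
    rcases eq_or_ne (f x) ∞ with h | h
    · have : {s : ℝ | ENNReal.ofReal s < f x} ∩ Ioi 0 = Ioi 0 := by
        ext s; simp [h]
      rw [this, h, Real.volume_Ioi]
    · have : {s : ℝ | ENNReal.ofReal s < f x} ∩ Ioi 0 = Ioo 0 (f x).toReal := by
        ext s
        simp only [mem_inter_iff, mem_ofPred_eq, mem_Ioi, mem_Ioo]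
        constructor
        · rintro ⟨h1, h2⟩
          exact ⟨h2, (ENNReal.ofReal_lt_iff_lt_toReal h2.le h).1 h1⟩
        · rintro ⟨h1, h2⟩
          exact ⟨(ENNReal.ofReal_lt_iff_lt_toReal h1.le h).2 h2, h1⟩
      rw [this, Real.volume_Ioo, sub_zero, ENNReal.ofReal_toReal h]
  rw [lintegral_congr h1, lintegral_lintegral_swap]
  · refine lintegral_congr fun s => ?_
    have : ∀ x, {z : α × ℝ | ENNReal.ofReal z.2 < f z.1}.indicator (fun _ => (1 : ℝ≥0∞)) (x, s)
        = {x | ENNReal.ofReal s < f x}.indicator (fun _ => 1) x := fun s => rfl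
    simp only [this]
    rw [lintegral_indicator_const (measurableSet_lt measurable_const hf), one_mul]
  · exact (measurable_const.indicator hm).aemeasurable

lemma ENNReal.rpow_mul_rpow_le_add {a b : ℝ≥0∞} {t : ℝ} (h0 : 0 < t) (h1 : t < 1) :
    a ^ (1 - t) * b ^ t ≤ ENNReal.ofReal (1 - t) * a + ENNReal.ofReal t * b := by
  have h1' : 0 < 1 - t := by linarith
  rcases eq_or_ne a ∞ with rfl | ha
  · rw [ENNReal.mul_top (by simpa using h1)]; simp
  rcases eq_or_ne b ∞ with rfl | hb
  · rw [ENNReal.mul_top (by simpa using h0)]; simp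
  lift a to ℝ≥0 using ha
  lift b to ℝ≥0 using hb
  have := NNReal.geom_mean_le_arith_mean2_weighted (1 - t).toNNReal t.toNNReal a b
    (by rw [← Real.toNNReal_add h1'.le h0.le]; simp)
  rw [Real.coe_toNNReal _ h1'.le, Real.coe_toNNReal _ h0.le] at this
  rw [← ENNReal.coe_rpow_of_nonneg _ h1'.le, ← ENNReal.coe_rpow_of_nonneg _ h0.le, ENNReal.ofReal, ENNReal.ofReal]
  exact_mod_cast this

/-- Normalised one-dimensional Prékopa–Leindler inequality. -/
lemma prekopa_leindler_real_of_iSup_eq_one {t : ℝ} (h0 : 0 < t) (h1 : t < 1) {f g h : ℝ → ℝ≥0∞}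
    (hf : Measurable f) (hg : Measurable g) (hh : Measurable h)
    (hfs : ⨆ x, f x = 1) (hgs : ⨆ x, g x = 1)
    (H : ∀ x y, f x ^ (1 - t) * g y ^ t ≤ h ((1 - t) * x + t * y)) :
    (∫⁻ x, f x) ^ (1 - t) * (∫⁻ x, g x) ^ t ≤ ∫⁻ x, h x := by
  have h1' : 0 < 1 - t := by linarith
  refine (ENNReal.rpow_mul_rpow_le_add h0 h1).trans ?_
  rw [lintegral_eq_lintegral_ofReal_lt _ hf, lintegral_eq_lintegral_ofReal_lt _ hg,
    lintegral_eq_lintegral_ofReal_lt _ hh]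
  have hmeas : ∀ {f : ℝ → ℝ≥0∞}, Measurable f → Measurable
      (fun s : ℝ => volume {x | ENNReal.ofReal s < f x}) := by
    intro f hf
    refine Antitone.measurable fun a b hab => measure_mono fun x hx => ?_
    exact lt_of_le_of_lt (ENNReal.ofReal_le_ofReal hab) hx
  rw [← lintegral_const_mul _ (hmeas hf), ← lintegral_const_mul _ (hmeas hg),
    ← lintegral_add_left ((hmeas hf).const_mul _)]
  refine setLIntegral_mono (hmeas hh) fun s hs => ?_
  have scale : ∀ (c : ℝ) (A : Set ℝ), 0 < c → ENNReal.ofReal c * volume A = volume (c • A) := by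
    intro c A hc
    rw [Measure.addHaar_smul]; simp [abs_of_pos hc]
  rcases lt_or_ge s 1 with hs1 | hs1
  · rw [scale _ _ h1', scale _ _ h0]
    have hs' : ENNReal.ofReal s < 1 := by simpa using hs1
    apply volume_add_volume_le_of_add_mem
    · exact (measurableSet_lt measurable_const hf).const_smul_of_ne_zero h1'.ne'
    · exact (measurableSet_lt measurable_const hg).const_smul_of_ne_zero h0.ne'
    · obtain ⟨x, hx⟩ := lt_iSup_iff.1 (hfs ▸ hs')
      exact ⟨_, smul_mem_smul_set hx⟩
    · obtain ⟨x, hx⟩ := lt_iSup_iff.1 (hgs ▸ hs')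
      exact ⟨_, smul_mem_smul_set hx⟩
    · rintro _ ⟨x, hx, rfl⟩ _ ⟨y, hy, rfl⟩
      simp only [mem_ofPred_eq, smul_eq_mul] at hx hy ⊢
      refine lt_of_lt_of_le ?_ (H x y)
      have e : ENNReal.ofReal s = ENNReal.ofReal s ^ (1 - t) * ENNReal.ofReal s ^ t := by
        rw [← ENNReal.rpow_add_of_nonneg _ _ h1'.le h0.le]; simp
      rw [e]
      exact ENNReal.mul_lt_mul (ENNReal.rpow_lt_rpow hx h1') (ENNReal.rpow_lt_rpow hy h0)
  · have e : ∀ f : ℝ → ℝ≥0∞, ⨆ x, f x = 1 → {x | ENNReal.ofReal s < f x} = ∅ := by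
      intro f hfs
      ext x
      simp only [mem_ofPred_eq, mem_empty_iff_false, iff_false, not_lt]
      calc f x ≤ ⨆ x, f x := le_iSup f x
        _ = ENNReal.ofReal 1 := by simp [hfs]
        _ ≤ _ := ENNReal.ofReal_le_ofReal hs1
    simp [e f hfs, e g hgs]

/-- One-dimensional Prékopa–Leindler inequality. -/
lemma prekopa_leindler_real {t : ℝ} (h0 : 0 < t) (h1 : t < 1) {f g h : ℝ → ℝ≥0∞}
    (hf : Measurable f) (hg : Measurable g) (hh : Measurable h)
    (H : ∀ x y, f x ^ (1 - t) * g y ^ t ≤ h ((1 - t) * x + t * y)) :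
    (∫⁻ x, f x) ^ (1 - t) * (∫⁻ x, g x) ^ t ≤ ∫⁻ x, h x := by
  have h1' : 0 < 1 - t := by linarith
  have bdd : ∀ f g : ℝ → ℝ≥0∞, Measurable f → Measurable g → ⨆ x, f x ≠ ∞ → ⨆ x, g x ≠ ∞ →
      (∀ x y, f x ^ (1 - t) * g y ^ t ≤ h ((1 - t) * x + t * y)) →
      (∫⁻ x, f x) ^ (1 - t) * (∫⁻ x, g x) ^ t ≤ ∫⁻ x, h x := by
    intro f g hf hg hfb hgb H
    rcases eq_or_ne (⨆ x, f x) 0 with ha | ha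
    · have : ∀ x, f x = 0 := by simpa using ha
      simp [this, h1']
    rcases eq_or_ne (⨆ x, g x) 0 with hb | hb
    · have : ∀ x, g x = 0 := by simpa using hb
      simp [this, h0]
    set a := ⨆ x, f x with ha'
    set b := ⨆ x, g x with hb'
    set c := (a⁻¹) ^ (1 - t) * (b⁻¹) ^ t with hc
    have := prekopa_leindler_real_of_iSup_eq_one h0 h1 (f := fun x => a⁻¹ * f x)
      (g := fun x => b⁻¹ * g x) (h := fun x => c * h x) (hf.const_mul _) (hg.const_mul _)
      (hh.const_mul _) (by rw [← ENNReal.mul_iSup, ENNReal.inv_mul_cancel ha hfb])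
      (by rw [← ENNReal.mul_iSup, ENNReal.inv_mul_cancel hb hgb])
      (fun x y => by
        rw [ENNReal.mul_rpow_of_nonneg _ _ h1'.le, ENNReal.mul_rpow_of_nonneg _ _ h0.le, hc,
          mul_mul_mul_comm]
        gcongr
        exact H x y)
    rw [lintegral_const_mul _ hf, lintegral_const_mul _ hg, lintegral_const_mul _ hh,
      ENNReal.mul_rpow_of_nonneg _ _ h1'.le, ENNReal.mul_rpow_of_nonneg _ _ h0.le,
      mul_mul_mul_comm] at this
    refine (ENNReal.mul_le_mul_iff_right ?_ ?_).1 this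
    · refine mul_ne_zero ?_ ?_ <;> simp [ENNReal.rpow_eq_zero_iff, hfb, hgb, h0.not_gt, h1.not_gt]
    · refine ENNReal.mul_ne_top ?_ ?_ <;> apply ENNReal.rpow_ne_top_of_nonneg <;>
        simp [h1'.le, h0.le, ha, hb]
  rcases eq_or_ne (∫⁻ x, f x) 0 with hfi | hfi
  · simp [hfi, h1']
  rcases eq_or_ne (∫⁻ x, g x) 0 with hgi | hgi
  · simp [hgi, h0]
  have tend : ∀ f : ℝ → ℝ≥0∞, Measurable f →
      Tendsto (fun N : ℕ => ∫⁻ x, min (f x) N) atTop (𝓝 (∫⁻ x, f x)) := by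
    intro f hf
    refine lintegral_tendsto_of_tendsto_of_monotone
      (fun N => (hf.min measurable_const).aemeasurable) (Eventually.of_forall fun x => ?_)
      (Eventually.of_forall fun x => ?_)
    · intro m n hmn
      have : (m : ℝ≥0∞) ≤ n := by exact_mod_cast hmn
      exact min_le_min_left _ this
    · have := (tendsto_const_nhds (x := f x)).min ENNReal.tendsto_nat_nhds_top
      simpa using this
  have T := ENNReal.Tendsto.mul
    ((ENNReal.continuous_rpow_const (y := 1 - t)).continuousAt.tendsto.comp (tend f hf))
    (Or.inl (by simp [ENNReal.rpow_eq_zero_iff, hfi, h1.not_gt]))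
    ((ENNReal.continuous_rpow_const (y := t)).continuousAt.tendsto.comp (tend g hg))
    (Or.inl (by simp [ENNReal.rpow_eq_zero_iff, hgi, h0.not_gt]))
  refine le_of_tendsto' T fun N => ?_
  refine bdd _ _ (hf.min measurable_const) (hg.min measurable_const) ?_ ?_ fun x y => ?_
  · exact ne_top_of_le_ne_top (ENNReal.natCast_ne_top N) (iSup_le fun x => min_le_right _ _)
  · exact ne_top_of_le_ne_top (ENNReal.natCast_ne_top N) (iSup_le fun x => min_le_right _ _)
  · refine le_trans ?_ (H x y)
    gcongr <;> exact min_le_left _ _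

/-- Prékopa–Leindler inequality in `ℝⁿ`. -/
lemma prekopa_leindler_pi {t : ℝ} (h0 : 0 < t) (h1 : t < 1) : ∀ {n : ℕ}
    {f g h : (Fin n → ℝ) → ℝ≥0∞} (_ : Measurable f) (_ : Measurable g) (_ : Measurable h)
    (_ : ∀ x y, f x ^ (1 - t) * g y ^ t ≤ h ((1 - t) • x + t • y)),
    (∫⁻ x, f x) ^ (1 - t) * (∫⁻ x, g x) ^ t ≤ ∫⁻ x, h x
  | 0, f, g, h, _, _, _, H => by
    have e : ∀ f : (Fin 0 → ℝ) → ℝ≥0∞, ∫⁻ x, f x = f 0 := by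
      intro f
      rw [volume_pi, Measure.pi_of_empty _ 0, lintegral_dirac]
    rw [e, e, e]
    simpa using H 0 0
  | n + 1, f, g, h, hf, hg, hh, H => by
    have esymm : (fun z : ℝ × (Fin n → ℝ) => (Fin.cons z.1 z.2 : Fin (n + 1) → ℝ)) =
        (MeasurableEquiv.piFinSuccAbove (fun _ : Fin (n + 1) => ℝ) 0).symm := by
      ext z i
      simp [MeasurableEquiv.piFinSuccAbove]
    have hmc : Measurable fun z : ℝ × (Fin n → ℝ) => (Fin.cons z.1 z.2 : Fin (n + 1) → ℝ) := by
      rw [esymm]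
      exact (MeasurableEquiv.piFinSuccAbove (fun _ : Fin (n + 1) => ℝ) 0).symm.measurable
    have e : ∀ f : (Fin (n + 1) → ℝ) → ℝ≥0∞, Measurable f →
        ∫⁻ x, f x = ∫⁻ a, ∫⁻ y, f (Fin.cons a y) := by
      intro f hf
      rw [← (volume_preserving_piFinSuccAbove (fun _ : Fin (n + 1) => ℝ) 0).symm.lintegral_comp hf]
      rw [← esymm]
      exact lintegral_prod (μ := (volume : Measure ℝ)) (ν := (volume : Measure (Fin n → ℝ)))
        (fun z => f (Fin.cons z.1 z.2)) (hf.comp hmc).aemeasurable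
    have me : ∀ f : (Fin (n + 1) → ℝ) → ℝ≥0∞, Measurable f →
        Measurable fun a => ∫⁻ y, f (Fin.cons a y) := fun f hf =>
      (hf.comp hmc).lintegral_prod_right'
    have mc : ∀ f : (Fin (n + 1) → ℝ) → ℝ≥0∞, Measurable f → ∀ a : ℝ,
        Measurable fun y : Fin n → ℝ => f (Fin.cons a y) := fun f hf a =>
      (hf.comp hmc).comp measurable_prodMk_left
    rw [e f hf, e g hg, e h hh]
    refine prekopa_leindler_real h0 h1 (me f hf) (me g hg) (me h hh) fun a b => ?_
    refine prekopa_leindler_pi h0 h1 (mc f hf a) (mc g hg b) (mc h hh _) fun x y => ?_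
    refine (H _ _).trans_eq ?_
    congr 1
    ext i
    refine Fin.cases ?_ (fun j => ?_) i <;> simp

end PrekopaLeindler

section ConeMeasure

open Set
open scoped ENNReal NNReal Topology Pointwise

variable {n : ℕ} {A : Fin n → ℝ}

lemma isOpen_monSet (A : Fin n → ℝ) : IsOpen (monSet A) := by
  have : monSet A = ⋂ i, {x | 0 < A i → 0 < x i} := by ext; simp [monSet]
  rw [this]
  refine isOpen_iInter_of_finite fun i => ?_
  by_cases h : 0 < A i
  · simp only [h, true_imp_iff]
    exact isOpen_lt continuous_const (by fun_prop)
  · simp [h]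

lemma smul_mem_monSet {c : ℝ} (hc : 0 < c) {x : EuclideanSpace ℝ (Fin n)} (hx : x ∈ monSet A) :
    c • x ∈ monSet A := fun i hi => by
  simpa using mul_pos hc (hx i hi)

lemma add_mem_monSet {x y : EuclideanSpace ℝ (Fin n)} (hx : x ∈ monSet A) (hy : y ∈ monSet A) :
    x + y ∈ monSet A := fun i hi => by
  simpa using add_pos (hx i hi) (hy i hi)

lemma monWeight_nonneg (A : Fin n → ℝ) (x : EuclideanSpace ℝ (Fin n)) : 0 ≤ monWeight A x :=
  Finset.prod_nonneg fun _ _ => by positivity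

lemma continuous_monWeight (hA : ∀ i, 0 ≤ A i) : Continuous (monWeight A) := by
  unfold monWeight
  refine continuous_finsetProd _ fun i _ => ?_
  exact Continuous.rpow_const (by fun_prop) fun x => Or.inr (hA i)

lemma monWeight_pos (hA : ∀ i, 0 ≤ A i) {x : EuclideanSpace ℝ (Fin n)} (hx : x ∈ monSet A) :
    0 < monWeight A x := by
  refine Finset.prod_pos fun i _ => ?_
  rcases (hA i).eq_or_lt with h | h
  · simp [← h]
  · have := hx i h
    positivity

lemma monWeight_smul {c : ℝ} (hc : 0 < c) (x : EuclideanSpace ℝ (Fin n)) :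
    monWeight A (c • x) = c ^ (∑ i, A i) * monWeight A x := by
  unfold monWeight
  rw [Real.rpow_sum_of_pos hc, ← Finset.prod_mul_distrib]
  refine Finset.prod_congr rfl fun i _ => ?_
  rw [PiLp.smul_apply, smul_eq_mul, abs_mul, abs_of_pos hc, mul_rpow hc.le (abs_nonneg _)]

/-- The measure `x^A dx` on the cone `monSet A`. -/
def coneMeasure (A : Fin n → ℝ) : Measure (EuclideanSpace ℝ (Fin n)) :=
  (volume.restrict (monSet A)).withDensity fun x => ENNReal.ofReal (monWeight A x)

lemma coneMeasure_apply {S : Set (EuclideanSpace ℝ (Fin n))} (hS : MeasurableSet S) :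
    coneMeasure A S =
      ∫⁻ x, S.indicator ((monSet A).indicator fun x => ENNReal.ofReal (monWeight A x)) x := by
  rw [coneMeasure, withDensity_apply _ hS, Measure.restrict_restrict hS, lintegral_indicator hS,
    setLIntegral_indicator (isOpen_monSet A).measurableSet, inter_comm]

lemma coneMeasure_smul {c : ℝ} (hc : 0 < c)
    {S : Set (EuclideanSpace ℝ (Fin n))} (hS : MeasurableSet S) :
    coneMeasure A (c • S) = ENNReal.ofReal (c ^ monDim A) * coneMeasure A S := by
  rw [coneMeasure_apply (hS.const_smul_of_ne_zero hc.ne'), coneMeasure_apply hS]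
  set F := (c • S).indicator ((monSet A).indicator fun x => ENNReal.ofReal (monWeight A x)) with hF
  have h1 : ∫⁻ x, F (c • x) = ENNReal.ofReal ((c ^ n)⁻¹) * ∫⁻ x, F x := by
    have e := Measure.map_addHaar_smul (volume : Measure (EuclideanSpace ℝ (Fin n))) hc.ne'
    have : ∫⁻ x, F (c • x) = ∫⁻ x, F x ∂(Measure.map (c • ·) volume) :=
      ((Homeomorph.smulOfNeZero c hc.ne').toMeasurableEquiv.measurableEmbedding.lintegral_map
        (f := F)).symm
    rw [this, e, lintegral_smul_measure]
    simp [abs_of_pos hc]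
  have h2 : ∀ x, F (c • x) = ENNReal.ofReal (c ^ (∑ i, A i)) *
      S.indicator ((monSet A).indicator fun x => ENNReal.ofReal (monWeight A x)) x := by
    intro x
    have hm : c • x ∈ monSet A ↔ x ∈ monSet A := by
      refine ⟨fun h => ?_, smul_mem_monSet hc⟩
      have := smul_mem_monSet (inv_pos.2 hc) h
      rwa [inv_smul_smul₀ hc.ne'] at this
    have hs : c • x ∈ c • S ↔ x ∈ S := smul_mem_smul_set_iff₀ hc.ne' _ _
    by_cases h : x ∈ S
    · by_cases h' : x ∈ monSet A
      · rw [hF, indicator_of_mem (hs.2 h), indicator_of_mem (hm.2 h'), indicator_of_mem h,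
          indicator_of_mem h', monWeight_smul hc, ENNReal.ofReal_mul (rpow_nonneg hc.le _)]
      · rw [hF, indicator_of_mem (hs.2 h), indicator_of_notMem (mt hm.1 h'), indicator_of_mem h,
          indicator_of_notMem h', mul_zero]
    · rw [hF, indicator_of_notMem (mt hs.1 h), indicator_of_notMem h, mul_zero]
  simp_rw [h2] at h1
  rw [lintegral_const_mul' _ _ ENNReal.ofReal_ne_top] at h1
  have hcn : 0 < c ^ n := by positivity
  have h3 := congrArg (fun z => ENNReal.ofReal (c ^ n) * z) h1
  rw [← mul_assoc, ← mul_assoc, ← ENNReal.ofReal_mul hcn.le, ← ENNReal.ofReal_mul hcn.le,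
    mul_inv_cancel₀ hcn.ne', ENNReal.ofReal_one, one_mul] at h3
  rw [← h3, monDim, rpow_add hc, Fintype.card_fin, rpow_natCast]

lemma rpow_monWeight_mul_le (hA : ∀ i, 0 ≤ A i) {t : ℝ} (h0 : 0 < t) (h1 : t < 1)
    {x y : EuclideanSpace ℝ (Fin n)} (hx : x ∈ monSet A) (hy : y ∈ monSet A) :
    monWeight A x ^ (1 - t) * monWeight A y ^ t ≤ monWeight A ((1 - t) • x + t • y) := by
  unfold monWeight
  rw [← Real.finsetProd_rpow _ _ fun i _ => by positivity,
    ← Real.finsetProd_rpow _ _ fun i _ => by positivity, ← Finset.prod_mul_distrib]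
  refine Finset.prod_le_prod (fun i _ => by positivity) fun i _ => ?_
  rcases (hA i).eq_or_lt with h | h
  · simp [← h]
  have hxi := hx i h
  have hyi := hy i h
  have h1' : 0 < 1 - t := by linarith
  simp only [PiLp.add_apply, PiLp.smul_apply, smul_eq_mul]
  rw [abs_of_pos hxi, abs_of_pos hyi, abs_of_pos (by positivity), ← rpow_mul hxi.le,
    ← rpow_mul hyi.le, mul_comm (A i), mul_comm (A i), rpow_mul hxi.le, rpow_mul hyi.le,
    ← mul_rpow (by positivity) (by positivity)]
  exact rpow_le_rpow (by positivity) (geom_mean_le_arith_mean2_weighted h1'.le h0.le hxi.le hyi.le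
    (by ring)) (hA i)

lemma coneMeasure_rpow_mul_le (hA : ∀ i, 0 ≤ A i) {t : ℝ} (h0 : 0 < t) (h1 : t < 1)
    {K L S : Set (EuclideanSpace ℝ (Fin n))} (hK : MeasurableSet K) (hL : MeasurableSet L)
    (hS : MeasurableSet S) (H : ∀ x ∈ K, ∀ y ∈ L, (1 - t) • x + t • y ∈ S) :
    coneMeasure A K ^ (1 - t) * coneMeasure A L ^ t ≤ coneMeasure A S := by
  have h1' : 0 < 1 - t := by linarith
  set F : Set (EuclideanSpace ℝ (Fin n)) → EuclideanSpace ℝ (Fin n) → ℝ≥0∞ := fun S =>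
    S.indicator ((monSet A).indicator fun x => ENNReal.ofReal (monWeight A x)) with hF
  have hFm : ∀ S, MeasurableSet S → Measurable (F S) := fun S hS =>
    (((continuous_monWeight hA).measurable.ennreal_ofReal).indicator
      (isOpen_monSet A).measurableSet).indicator hS
  have e : ∀ S, MeasurableSet S → coneMeasure A S = ∫⁻ x : Fin n → ℝ, F S (WithLp.toLp 2 x) := by
    intro S hS
    rw [coneMeasure_apply hS, ← (PiLp.volume_preserving_toLp (Fin n)).lintegral_comp (hFm S hS)]
  have hm : ∀ S, MeasurableSet S → Measurable fun x : Fin n → ℝ => F S (WithLp.toLp 2 x) :=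
    fun S hS => (hFm S hS).comp (PiLp.volume_preserving_toLp (Fin n)).measurable
  rw [e K hK, e L hL, e S hS]
  refine prekopa_leindler_pi h0 h1 (hm K hK) (hm L hL) (hm S hS) fun x y => ?_
  have ez : ∀ S x, F S x ≠ 0 → x ∈ S ∧ x ∈ monSet A ∧ F S x = ENNReal.ofReal (monWeight A x) := by
    intro S x hx
    simp only [hF, indicator] at hx ⊢
    split_ifs at hx ⊢ <;> simp_all
  rcases eq_or_ne (F K (WithLp.toLp 2 x)) 0 with hx | hx
  · rw [hx, ENNReal.zero_rpow_of_pos h1', zero_mul]; exact zero_le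
  rcases eq_or_ne (F L (WithLp.toLp 2 y)) 0 with hy | hy
  · rw [hy, ENNReal.zero_rpow_of_pos h0, mul_zero]; exact zero_le
  obtain ⟨hxK, hxC, ex⟩ := ez _ _ hx
  obtain ⟨hyL, hyC, ey⟩ := ez _ _ hy
  rw [ex, ey, ENNReal.ofReal_rpow_of_nonneg (monWeight_nonneg _ _) h1'.le,
    ENNReal.ofReal_rpow_of_nonneg (monWeight_nonneg _ _) h0.le,
    ← ENNReal.ofReal_mul (rpow_nonneg (monWeight_nonneg _ _) _)]
  have eS : F S (WithLp.toLp 2 ((1 - t) • x + t • y)) = ENNReal.ofReal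
      (monWeight A ((1 - t) • (WithLp.toLp 2 x) + t • (WithLp.toLp 2 y))) := by
    simp only [hF]
    rw [WithLp.toLp_add, WithLp.toLp_smul, WithLp.toLp_smul, indicator_of_mem (H _ hxK _ hyL),
      indicator_of_mem (add_mem_monSet (smul_mem_monSet h1' hxC) (smul_mem_monSet h0 hyC))]
  rw [eS]
  exact ENNReal.ofReal_le_ofReal (rpow_monWeight_mul_le hA h0 h1 hxC hyC)

lemma coneMeasure_lt_top (hA : ∀ i, 0 ≤ A i) {S : Set (EuclideanSpace ℝ (Fin n))}
    (hS : Bornology.IsBounded S) : coneMeasure A S < ∞ := by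
  have hl : IsLocallyFiniteMeasure (coneMeasure A) :=
    IsLocallyFiniteMeasure.withDensity_ofReal (continuous_monWeight hA)
  exact (measure_mono subset_closure).trans_lt hS.isCompact_closure.measure_lt_top

lemma coneMeasure_unitBall_pos (hA : ∀ i, 0 ≤ A i) :
    0 < coneMeasure A (Metric.ball 0 1) := by
  have hopen := (Metric.isOpen_ball (x := (0 : EuclideanSpace ℝ (Fin n))) (ε := 1)).inter
    (isOpen_monSet A)
  have hne : (Metric.ball (0 : EuclideanSpace ℝ (Fin n)) 1 ∩ monSet A).Nonempty := by
    set e : EuclideanSpace ℝ (Fin n) := WithLp.toLp 2 fun _ => 1 with he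
    have he' : e ∈ monSet A := fun i _ => by simp [he]
    refine ⟨(‖e‖ + 1)⁻¹ • e, ?_, smul_mem_monSet (by positivity) he'⟩
    have h : 0 < ‖e‖ + 1 := by positivity
    rw [mem_ball_zero_iff, norm_smul, norm_inv, Real.norm_of_nonneg h.le, inv_mul_lt_iff₀ h]
    linarith
  rw [pos_iff_ne_zero, coneMeasure, withDensity_apply _ Metric.isOpen_ball.measurableSet,
    Measure.restrict_restrict Metric.isOpen_ball.measurableSet, ← pos_iff_ne_zero]
  rw [setLIntegral_pos_iff (continuous_monWeight hA).measurable.ennreal_ofReal]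
  refine (hopen.measure_pos volume hne).trans_le (measure_mono fun x hx => ⟨?_, hx⟩)
  simpa using monWeight_pos hA hx.2

/-- The radius of the ball centred at the origin with the same cone measure as `S`. -/
def coneRadius (A : Fin n → ℝ) (S : Set (EuclideanSpace ℝ (Fin n))) : ℝ :=
  ((coneMeasure A).real S / (coneMeasure A).real (Metric.ball 0 1)) ^ (1 / monDim A)

lemma coneMeasure_ball {r : ℝ} (hr : 0 < r) : coneMeasure A (Metric.ball 0 r) =
    ENNReal.ofReal (r ^ monDim A) * coneMeasure A (Metric.ball 0 1) := by
  rw [← coneMeasure_smul hr Metric.isOpen_ball.measurableSet, smul_unitBall_of_pos hr]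

/-- Brunn–Minkowski inequality for the neighbourhoods of a set. -/
lemma coneRadius_add_le (hA : ∀ i, 0 ≤ A i) (hD : 0 < monDim A)
    {K S : Set (EuclideanSpace ℝ (Fin n))} (hK : MeasurableSet K) (hS : MeasurableSet S)
    (hK0 : coneMeasure A K ≠ 0) (hSf : coneMeasure A S ≠ ∞) {δ : ℝ} (hδ : 0 < δ)
    (H : ∀ y ∈ K, ∀ x, ‖x - y‖ < δ → x ∈ S) :
    coneRadius A K + δ ≤ coneRadius A S := by
  set μ := coneMeasure A with hμ
  set D := monDim A with hDdef
  set β := μ (Metric.ball 0 1) with hβ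
  have hβ0 : 0 < β := coneMeasure_unitBall_pos hA
  have hβf : β < ∞ := coneMeasure_lt_top hA Metric.isBounded_ball
  have hβr : 0 < β.toReal := ENNReal.toReal_pos hβ0.ne' hβf.ne
  have hKS : K ⊆ S := fun y hy => H y hy y (by simpa)
  have hKf : μ K ≠ ∞ := ne_top_of_le_ne_top hSf (measure_mono hKS)
  have hKr : 0 < (μ K).toReal := ENNReal.toReal_pos hK0 hKf
  set a := coneRadius A K with ha
  have ha' : a = ((μ K).toReal / β.toReal) ^ (1 / D) := rfl
  have ha0 : 0 < a := by
    rw [ha']; exact rpow_pos_of_pos (div_pos hKr hβr) _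
  have haD : a ^ D * β.toReal = (μ K).toReal := by
    rw [ha', ← rpow_mul (div_pos hKr hβr).le, one_div_mul_cancel hD.ne', rpow_one]
    exact div_mul_cancel₀ _ hβr.ne'
  have hs : 0 < a + δ := by positivity
  have h1 : μ (a⁻¹ • K) = β := by
    rw [hμ, coneMeasure_smul (inv_pos.2 ha0) hK, ← hμ, ← hDdef, ← ENNReal.ofReal_toReal hKf, ← haD,
      ← ENNReal.ofReal_mul (by positivity), ← mul_assoc, ← mul_rpow (by positivity) ha0.le,
      inv_mul_cancel₀ ha0.ne', one_rpow, one_mul, ENNReal.ofReal_toReal hβf.ne]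
  have h2 := coneMeasure_rpow_mul_le hA (t := δ / (a + δ)) (by positivity)
    (by rw [div_lt_one hs]; linarith) (hK.const_smul_of_ne_zero (inv_ne_zero ha0.ne'))
    (Metric.isOpen_ball (x := (0 : EuclideanSpace ℝ (Fin n))) (ε := 1)).measurableSet
    (hS.const_smul_of_ne_zero (inv_ne_zero hs.ne')) ?_
  · rw [← hμ, h1, ← hβ, ← ENNReal.rpow_add _ _ hβ0.ne' hβf.ne, sub_add_cancel, ENNReal.rpow_one, hμ,
      coneMeasure_smul (inv_pos.2 hs) hS, ← hμ, ← hDdef] at h2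
    have h3 := ENNReal.toReal_mono (ENNReal.mul_ne_top ENNReal.ofReal_ne_top hSf) h2
    rw [ENNReal.toReal_mul, ENNReal.toReal_ofReal (by positivity), inv_rpow hs.le,
      le_inv_mul_iff₀ (by positivity)] at h3
    have h4 : (a + δ) ^ D ≤ μ.real S / μ.real (Metric.ball 0 1) := by
      exact (le_div_iff₀ hβr).2 h3
    calc a + δ = ((a + δ) ^ D) ^ (1 / D) := by
          rw [← rpow_mul hs.le, mul_one_div_cancel hD.ne', rpow_one]
      _ ≤ _ := rpow_le_rpow (by positivity) h4 (by positivity)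
  · rintro _ ⟨x, hx, rfl⟩ y hy
    rw [mem_ball_zero_iff] at hy
    refine ⟨x + δ • y, H x hx _ ?_, ?_⟩
    · rw [add_sub_cancel_left, norm_smul, Real.norm_of_nonneg hδ.le]
      nlinarith
    · simp only [smul_add, smul_smul]
      congr 2
      · field_simp; ring
      · field_simp

end ConeMeasure

section Rearrangement

open Set
open scoped ENNReal NNReal Topology Pointwise

/-- The radial measure `D r^(D-1) dr` on `(0, ∞)`. -/
def radialMeasure (D : ℝ) : Measure ℝ :=
  (volume.restrict (Ioi 0)).withDensity fun r => ENNReal.ofReal (D * r ^ (D - 1))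

lemma radialMeasure_Iio {D : ℝ} (hD : 0 < D) {R : ℝ} (hR : 0 ≤ R) :
    radialMeasure D (Iio R) = ENNReal.ofReal (R ^ D) := by
  rw [radialMeasure, withDensity_apply _ measurableSet_Iio,
    Measure.restrict_restrict measurableSet_Iio, Iio_inter_Ioi, restrict_Ioo_eq_restrict_Ioc]
  have hi : IntervalIntegrable (fun r : ℝ => D * r ^ (D - 1)) volume 0 R :=
    (intervalIntegral.intervalIntegrable_rpow' (by linarith)).const_mul D
  rw [← ofReal_integral_eq_lintegral_ofReal hi.1, ← intervalIntegral.integral_of_le hR,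
    intervalIntegral.integral_const_mul, integral_rpow (Or.inl (by linarith))]
  · congr 1
    rw [sub_add_cancel, zero_rpow hD.ne']
    field_simp; ring
  · filter_upwards [ae_restrict_mem measurableSet_Ioc] with r hr
    have := hr.1
    positivity

lemma ae_radialMeasure_pos (D : ℝ) : ∀ᵐ r ∂radialMeasure D, 0 < r :=
  (withDensity_absolutelyContinuous _ _).ae_le (ae_restrict_mem measurableSet_Ioi)

lemma ae_radialMeasure_of_ae {D : ℝ} {P : ℝ → Prop} (h : ∀ᵐ r, P r) :
    ∀ᵐ r ∂radialMeasure D, P r :=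
  (withDensity_absolutelyContinuous _ _).ae_le (ae_restrict_of_ae h)

lemma integral_radialMeasure {D : ℝ} (hD : 0 < D) (f : ℝ → ℝ) :
    ∫ r, f r ∂radialMeasure D = ∫ r in Ioi 0, D * r ^ (D - 1) * f r := by
  rw [radialMeasure, integral_withDensity_eq_integral_toReal_smul (by fun_prop) (by simp)]
  refine setIntegral_congr_fun measurableSet_Ioi fun r hr => ?_
  have : 0 < r := hr
  rw [ENNReal.toReal_ofReal (by positivity), smul_eq_mul]

instance (D : ℝ) : SFinite (radialMeasure D) := by unfold radialMeasure; infer_instance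

variable {n : ℕ} {A : Fin n → ℝ} {v : EuclideanSpace ℝ (Fin n) → ℝ}

instance (A : Fin n → ℝ) : SFinite (coneMeasure A) := by unfold coneMeasure; infer_instance

/-- The unit ball of the cone, as a real number. -/
def coneBeta (A : Fin n → ℝ) : ℝ := (coneMeasure A).real (Metric.ball 0 1)

lemma coneBeta_pos (hA : ∀ i, 0 ≤ A i) : 0 < coneBeta A :=
  ENNReal.toReal_pos (coneMeasure_unitBall_pos hA).ne' (coneMeasure_lt_top hA Metric.isBounded_ball).ne

lemma coneRadius_nonneg (S : Set (EuclideanSpace ℝ (Fin n))) : 0 ≤ coneRadius A S := by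
  unfold coneRadius; positivity

lemma coneRadius_mono (hD : 0 < monDim A) {S T : Set (EuclideanSpace ℝ (Fin n))} (h : S ⊆ T)
    (hT : coneMeasure A T ≠ ∞) : coneRadius A S ≤ coneRadius A T := by
  unfold coneRadius
  have := measureReal_mono h hT
  gcongr

lemma coneMeasure_ne_zero_of_coneRadius_pos (hD : 0 < monDim A)
    {S : Set (EuclideanSpace ℝ (Fin n))}
    (h : 0 < coneRadius A S) : coneMeasure A S ≠ 0 := by
  intro h0
  simp [coneRadius, Measure.real, h0, zero_rpow (inv_ne_zero hD.ne')] at h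

lemma coneMeasure_eq_radialMeasure (hA : ∀ i, 0 ≤ A i) (hD : 0 < monDim A)
    {S : Set (EuclideanSpace ℝ (Fin n))} (hS : coneMeasure A S ≠ ∞) :
    coneMeasure A S =
      ENNReal.ofReal (coneBeta A) * radialMeasure (monDim A) (Iio (coneRadius A S)) := by
  have hb := coneBeta_pos hA
  rw [radialMeasure_Iio hD (coneRadius_nonneg S), coneRadius, ← coneBeta,
    ← rpow_mul (by positivity), one_div_mul_cancel hD.ne', rpow_one, ← ENNReal.ofReal_mul hb.le,
    mul_div_cancel₀ _ hb.ne', ofReal_measureReal hS]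

/-- The radially decreasing rearrangement of `v`, as a function of the radius. -/
def coneRearrangement (A : Fin n → ℝ) (v : EuclideanSpace ℝ (Fin n) → ℝ) (r : ℝ) : ℝ :=
  sSup {s | 0 ≤ s ∧ max r 0 < coneRadius A {x | s < v x}}

lemma coneMeasure_superlevel_ne_top (hA : ∀ i, 0 ≤ A i) (hs : HasCompactSupport v) {s : ℝ}
    (h : 0 ≤ s) : coneMeasure A {x | s < v x} ≠ ∞ := by
  refine ne_top_of_le_ne_top (coneMeasure_lt_top hA hs.isBounded).ne (measure_mono ?_)
  intro x hx
  exact subset_closure (ne_of_gt (lt_of_le_of_lt h hx))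

lemma bddAbove_coneRearrangement (hD : 0 < monDim A) (hv : Continuous v)
    (hs : HasCompactSupport v) (r : ℝ) :
    BddAbove {s | 0 ≤ s ∧ max r 0 < coneRadius A {x | s < v x}} := by
  obtain ⟨M, hM⟩ := (hs.isCompact_range hv).bddAbove
  refine ⟨M, fun s hs' => ?_⟩
  by_contra! h
  have h0 : coneMeasure A {x | s < v x} = 0 := by
    have : {x | s < v x} = ∅ := by
      ext x
      simpa using (hM (mem_range_self x)).trans h.le
    rw [this, measure_empty]
  exact coneMeasure_ne_zero_of_coneRadius_pos hD ((le_max_right r 0).trans_lt hs'.2) h0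

lemma coneRearrangement_nonneg (r : ℝ) : 0 ≤ coneRearrangement A v r :=
  Real.sSup_nonneg fun _ h => h.1

lemma coneRadius_superlevel_antitone (hA : ∀ i, 0 ≤ A i) (hD : 0 < monDim A)
    (hs : HasCompactSupport v) {s t : ℝ} (h0 : 0 ≤ s) (h : s ≤ t) :
    coneRadius A {x | t < v x} ≤ coneRadius A {x | s < v x} :=
  coneRadius_mono hD (fun _ hx => lt_of_le_of_lt h hx) (coneMeasure_superlevel_ne_top hA hs h0)

lemma exists_gt_lt_coneRadius (hA : ∀ i, 0 ≤ A i) (hD : 0 < monDim A)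
    (hs : HasCompactSupport v) {s r : ℝ} (h0 : 0 ≤ s)
    (h : r < coneRadius A {x | s < v x}) : ∃ t > s, r < coneRadius A {x | t < v x} := by
  have hU : {x | s < v x} = ⋃ k : ℕ, {x | s + 1 / ((k : ℝ) + 1) < v x} := by
    ext x
    simp only [mem_ofPred_eq, mem_iUnion]
    refine ⟨fun hx => ?_, fun ⟨k, hk⟩ => lt_trans (by simp; positivity) hk⟩
    obtain ⟨k, hk⟩ := exists_nat_one_div_lt (sub_pos.2 hx)
    exact ⟨k, by linarith⟩
  have hm : Monotone fun k : ℕ => {x | s + 1 / ((k : ℝ) + 1) < v x} := by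
    intro i j hij x hx
    have : 1 / ((j : ℝ) + 1) ≤ 1 / ((i : ℝ) + 1) := by gcongr
    simp only [mem_ofPred_eq] at hx ⊢
    linarith
  have ht := tendsto_measure_iUnion_atTop (μ := coneMeasure A) hm
  rw [← hU] at ht
  have ht2 := (ENNReal.tendsto_toReal (coneMeasure_superlevel_ne_top hA hs h0)).comp ht
  have ht3 : Tendsto (fun k : ℕ => coneRadius A {x | s + 1 / ((k : ℝ) + 1) < v x}) atTop
      (𝓝 (coneRadius A {x | s < v x})) := by
    refine (ht2.div_const _).rpow_const (Or.inr (by positivity))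
  obtain ⟨k, hk⟩ := (ht3.eventually (lt_mem_nhds h)).exists
  exact ⟨_, by simp; positivity, hk⟩

lemma lt_coneRearrangement_iff (hA : ∀ i, 0 ≤ A i) (hD : 0 < monDim A) (hv : Continuous v)
    (hs : HasCompactSupport v) {s r : ℝ} (h0 : 0 ≤ s) :
    s < coneRearrangement A v r ↔ max r 0 < coneRadius A {x | s < v x} := by
  constructor
  · intro h
    have hne : {s | 0 ≤ s ∧ max r 0 < coneRadius A {x | s < v x}}.Nonempty := by
      by_contra! he
      rw [coneRearrangement, he, Real.sSup_empty] at h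
      linarith
    obtain ⟨t, ht, hst⟩ := exists_lt_of_lt_csSup hne h
    exact ht.2.trans_le (coneRadius_superlevel_antitone hA hD hs h0 hst.le)
  · intro h
    obtain ⟨t, hst, ht⟩ := exists_gt_lt_coneRadius hA hD hs h0 h
    exact hst.trans_le (le_csSup (bddAbove_coneRearrangement hD hv hs r) ⟨h0.trans hst.le, ht⟩)

lemma antitone_coneRearrangement (hA : ∀ i, 0 ≤ A i) (hD : 0 < monDim A) (hv : Continuous v)
    (hs : HasCompactSupport v) : Antitone (coneRearrangement A v) := by
  intro a b hab
  by_contra! h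
  rw [lt_coneRearrangement_iff hA hD hv hs (coneRearrangement_nonneg a)] at h
  have h2 : max a 0 < coneRadius A {x | coneRearrangement A v a < v x} :=
    (max_le_max_right 0 hab).trans_lt h
  rw [← lt_coneRearrangement_iff hA hD hv hs (coneRearrangement_nonneg a)] at h2
  exact lt_irrefl _ h2

lemma lipschitzWith_coneRearrangement (hA : ∀ i, 0 ≤ A i) (hD : 0 < monDim A) {L : ℝ≥0}
    (hv : LipschitzWith L v) (hs : HasCompactSupport v) :
    LipschitzWith L (coneRearrangement A v) := by
  have hc := hv.continuous
  have hanti := antitone_coneRearrangement hA hD hc hs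
  refine LipschitzWith.of_le_add_mul L fun a b => ?_
  rcases le_total b a with hab | hab
  · exact (hanti hab).trans (by simp; positivity)
  rcases hab.eq_or_lt with rfl | hab
  · simp
  by_contra! h
  set s := coneRearrangement A v b with hsdef
  have hs0 : 0 ≤ s := coneRearrangement_nonneg b
  rw [Real.dist_eq, abs_sub_comm, abs_of_pos (sub_pos.2 hab),
    lt_coneRearrangement_iff hA hD hc hs (by nlinarith [L.2])] at h
  have hle := coneRadius_add_le hA hD (K := {x | s + L * (b - a) < v x}) (S := {x | s < v x})
    (measurableSet_lt measurable_const hc.measurable)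
    (measurableSet_lt measurable_const hc.measurable)
    (coneMeasure_ne_zero_of_coneRadius_pos hD ((le_max_right a 0).trans_lt h))
    (coneMeasure_superlevel_ne_top hA hs hs0) (sub_pos.2 hab) ?_
  · have : s < coneRearrangement A v b := by
      rw [lt_coneRearrangement_iff hA hD hc hs hs0]
      refine (max_le ?_ ?_).trans_lt (lt_of_lt_of_le (add_lt_add_left h (b - a)) hle)
      · linarith [le_max_left a 0]
      · linarith [le_max_right a 0]
    exact lt_irrefl _ this
  · intro y hy x hxy
    have h1 := hv.dist_le_mul y x
    rw [dist_comm y x, dist_eq_norm x y, Real.dist_eq] at h1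
    have h2 := le_abs_self (v y - v x)
    have h3 : (L : ℝ) * ‖x - y‖ ≤ L * (b - a) := by gcongr
    simp only [mem_ofPred_eq] at hy ⊢
    linarith

lemma coneRearrangement_eq_zero (hA : ∀ i, 0 ≤ A i) (hD : 0 < monDim A) (hv : Continuous v)
    (hs : HasCompactSupport v) {r : ℝ} (hr : coneRadius A {x | 0 < v x} ≤ r) :
    coneRearrangement A v r = 0 := by
  refine le_antisymm ?_ (coneRearrangement_nonneg r)
  by_contra! h
  rw [lt_coneRearrangement_iff hA hD hv hs le_rfl] at h
  linarith [le_max_left r 0]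

lemma coneMeasure_superlevel_eq (hA : ∀ i, 0 ≤ A i) (hD : 0 < monDim A) (hv : Continuous v)
    (hs : HasCompactSupport v) {s : ℝ} (h0 : 0 ≤ s) :
    coneMeasure A {x | s < v x} =
      ENNReal.ofReal (coneBeta A) * radialMeasure (monDim A) {r | s < coneRearrangement A v r} := by
  rw [coneMeasure_eq_radialMeasure hA hD (coneMeasure_superlevel_ne_top hA hs h0)]
  congr 1
  refine measure_congr ?_
  filter_upwards [ae_radialMeasure_pos (monDim A)] with r hr
  refine propext ?_
  change r < _ ↔ s < _
  rw [lt_coneRearrangement_iff hA hD hv hs h0, max_eq_left hr.le]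

lemma lintegral_rpow_coneRearrangement (hA : ∀ i, 0 ≤ A i) (hD : 0 < monDim A)
    (hv : Continuous v) (hv0 : ∀ x, 0 ≤ v x) (hs : HasCompactSupport v) {a : ℝ} (ha : 0 < a) :
    ∫⁻ x, ENNReal.ofReal (v x ^ a) ∂coneMeasure A = ENNReal.ofReal (coneBeta A) *
      ∫⁻ r, ENNReal.ofReal (coneRearrangement A v r ^ a) ∂radialMeasure (monDim A) := by
  have hm : Measurable (coneRearrangement A v) := (antitone_coneRearrangement hA hD hv hs).measurable
  rw [lintegral_rpow_eq_lintegral_meas_lt_mul _ (Eventually.of_forall hv0)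
    hv.measurable.aemeasurable ha,
    lintegral_rpow_eq_lintegral_meas_lt_mul _ (Eventually.of_forall coneRearrangement_nonneg)
    hm.aemeasurable ha,
    mul_left_comm, ← lintegral_const_mul' (ENNReal.ofReal (coneBeta A)) _ ENNReal.ofReal_ne_top]
  refine congrArg _ (setLIntegral_congr_fun (measurableSet_Ioi (a := (0 : ℝ))) fun s hs' => ?_)
  rw [coneMeasure_superlevel_eq hA hD hv hs (le_of_lt hs'), mul_assoc]

end Rearrangement

section PolyaSzego

open Set
open scoped ENNReal NNReal Topology Pointwise

variable {n : ℕ} {A : Fin n → ℝ} {u : EuclideanSpace ℝ (Fin n) → ℝ}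

lemma abs_le_add_of_norm_fderiv_le {E : Type*} [NormedAddCommGroup E] [NormedSpace ℝ E]
    {u : E → ℝ} (hu : Differentiable ℝ u) {x y : E} {δ g : ℝ}
    (h : ∀ w, ‖w - x‖ < δ → ‖fderiv ℝ u w‖ ≤ g) (hxy : ‖y - x‖ < δ) :
    |u y| ≤ |u x| + g * ‖y - x‖ := by
  have h1 := (convex_ball x δ).norm_image_sub_le_of_norm_fderiv_le (f := u) (𝕜 := ℝ) (C := g)
    (fun w _ => hu w) (fun w hw => h w (by simpa [dist_eq_norm] using hw))
    (x := x) (y := y) (Metric.mem_ball_self ((norm_nonneg _).trans_lt hxy))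
    (by simpa [dist_eq_norm] using hxy)
  rw [Real.norm_eq_abs] at h1
  linarith [abs_sub_abs_le_abs_sub (u y) (u x)]

lemma lintegral_coneRearrangement_shift_le (hA : ∀ i, 0 ≤ A i) (hD : 0 < monDim A) {p q : ℝ}
    (hpq : p.HolderConjugate q) (hu : ContDiff ℝ 1 u) (hs : HasCompactSupport u)
    {ε η R t Z : ℝ} (hε : 0 ≤ ε)
    (hη : ∀ x w, ‖w - x‖ < η → ‖fderiv ℝ u w‖ ≤ ‖fderiv ℝ u x‖ + ε)
    (hR : ∀ x, ∀ y, u y ≠ 0 → ‖x - y‖ < η → x ∈ Metric.ball 0 R)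
    {z : ℝ → ℝ} (hz : Measurable z) (hz0 : ∀ r, 0 ≤ z r) (hzZ : ∀ r, z r ≤ Z)
    (ht : 0 < t) (htη : t * Z < η) :
    ENNReal.ofReal (coneBeta A) * ∫⁻ r, ENNReal.ofReal
        (coneRearrangement A (fun x => |u x|) (r - t * z r) - t * (z r ^ q / q))
        ∂radialMeasure (monDim A) ≤
      ∫⁻ x, ENNReal.ofReal (|u x| + (Metric.ball 0 R).indicator
        (fun x => t * ((‖fderiv ℝ u x‖ + ε) ^ p / p)) x) ∂coneMeasure A := by
  have hp := hpq.pos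
  have hq := hpq.symm.pos
  have hη0 : 0 < η := (mul_nonneg ht.le ((hz0 0).trans (hzZ 0))).trans_lt htη
  set v : EuclideanSpace ℝ (Fin n) → ℝ := fun x => |u x| with hv
  have hvc : Continuous v := hu.continuous.abs
  have hvs : HasCompactSupport v := hs.comp_left (g := fun y => |y|) abs_zero
  set e : EuclideanSpace ℝ (Fin n) → ℝ := (Metric.ball 0 R).indicator
        (fun x => t * ((‖fderiv ℝ u x‖ + ε) ^ p / p)) with he
  have hdc : Continuous fun x => t * ((‖fderiv ℝ u x‖ + ε) ^ p / p) := by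
    refine continuous_const.mul (Continuous.div_const (Continuous.rpow_const ?_ ?_) _)
    · exact (hu.continuous_fderiv one_ne_zero).norm.add continuous_const
    · exact fun x => Or.inr hp.le
  have hem : Measurable e := hdc.measurable.indicator Metric.isOpen_ball.measurableSet
  have he0 : ∀ x, 0 ≤ e x := fun x => indicator_nonneg (fun x _ => by positivity) x
  have hVm : Measurable (coneRearrangement A v) :=
    (antitone_coneRearrangement hA hD hvc hvs).measurable
  have hYm : Measurable fun r => coneRearrangement A v (r - t * z r) - t * (z r ^ q / q) := by
    have h1 : Measurable fun r => coneRearrangement A v (r - t * z r) :=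
      hVm.comp (measurable_id.sub (hz.const_mul t))
    have h2 : Measurable fun r => t * (z r ^ q / q) := by fun_prop
    exact h1.sub h2
  have hEm : Measurable fun x => v x + e x := hvc.measurable.add hem
  change _ ≤ ∫⁻ x, ENNReal.ofReal (v x + e x) ∂coneMeasure A
  rw [lintegral_eq_lintegral_ofReal_lt _ hYm.ennreal_ofReal,
    lintegral_eq_lintegral_ofReal_lt _ hEm.ennreal_ofReal,
    ← lintegral_const_mul' _ _ ENNReal.ofReal_ne_top]
  refine setLIntegral_mono' measurableSet_Ioi fun s (hs0 : 0 < s) => ?_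
  simp only [ENNReal.ofReal_lt_ofReal_iff_of_nonneg hs0.le]
  have hfin : coneMeasure A {x | s < v x + e x} ≠ ∞ := by
    refine ne_top_of_le_ne_top
      (coneMeasure_lt_top hA (Metric.isBounded_ball (x := 0) (r := R))).ne (measure_mono ?_)
    intro x hx
    by_contra hx'
    have h1 : e x = 0 := indicator_of_notMem hx' _
    have h2 : u x = 0 := by
      by_contra h
      exact hx' (hR x x h (by simpa))
    simp only [mem_ofPred_eq, h1, hv, h2] at hx
    simp at hx
    linarith
  rw [coneMeasure_eq_radialMeasure hA hD hfin]
  gcongr ENNReal.ofReal _ * ?_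
  refine measure_mono_ae ?_
  filter_upwards [ae_radialMeasure_pos (monDim A)] with r hr hY
  change r < _
  change s < _ at hY
  have hzq : 0 ≤ z r ^ q / q := div_nonneg (rpow_nonneg (hz0 r) _) hq.le
  have hs' : 0 ≤ s + t * (z r ^ q / q) := by positivity
  have h1 : s + t * (z r ^ q / q) < coneRearrangement A v (r - t * z r) := by linarith
  rw [lt_coneRearrangement_iff hA hD hvc hvs hs'] at h1
  rcases (hz0 r).eq_or_lt with h0 | h0
  · rw [← h0, mul_zero, sub_zero, zero_rpow hq.ne', zero_div, mul_zero, add_zero,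
      max_eq_left hr.le] at h1
    refine h1.trans_le (coneRadius_mono hD (fun x hx => ?_) hfin)
    have := he0 x
    simp only [mem_ofPred_eq] at hx ⊢
    linarith
  · have h2 := coneRadius_add_le hA hD (K := {x | s + t * (z r ^ q / q) < v x})
      (S := {x | s < v x + e x}) (measurableSet_lt measurable_const hvc.measurable)
      (measurableSet_lt measurable_const (hvc.measurable.add hem))
      (coneMeasure_ne_zero_of_coneRadius_pos hD ((le_max_right _ 0).trans_lt h1)) hfin
      (mul_pos ht h0) ?_
    · linarith [le_max_left (r - t * z r) 0]
    · intro y hy x hxy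
      simp only [mem_ofPred_eq] at hy ⊢
      have hxη : ‖x - y‖ < η :=
        hxy.trans ((mul_le_mul_of_nonneg_left (hzZ r) ht.le).trans_lt htη)
      have hy0 : u y ≠ 0 := by
        intro h
        simp only [hv, h, abs_zero] at hy
        linarith
      have hxR : x ∈ Metric.ball 0 R := hR x y hy0 hxη
      have hex : e x = t * ((‖fderiv ℝ u x‖ + ε) ^ p / p) := indicator_of_mem hxR _
      have h3 := abs_le_add_of_norm_fderiv_le (hu.differentiable one_ne_zero) (x := x) (y := y)
        (hη x) (by rwa [norm_sub_rev])
      have hg : 0 ≤ ‖fderiv ℝ u x‖ + ε := by positivity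
      have h4 := young_inequality_of_nonneg hg (hz0 r) hpq
      rw [norm_sub_rev] at h3
      have h5 : (‖fderiv ℝ u x‖ + ε) * ‖x - y‖ ≤ (‖fderiv ℝ u x‖ + ε) * (t * z r) :=
        mul_le_mul_of_nonneg_left hxy.le hg
      rw [hex]
      simp only [hv] at hy ⊢
      nlinarith

end PolyaSzego

section PolyaSzegoLimit

open Set
open scoped ENNReal NNReal Topology Pointwise

lemma integrable_of_bounded_of_eq_zero {α : Type*} [MeasurableSpace α] {μ : Measure α} {f : α → ℝ}
    {s : Set α} (hs : μ s ≠ ∞) (hf : AEStronglyMeasurable f μ) {C : ℝ} (hC : ∀ x, |f x| ≤ C)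
    (h0 : ∀ x, x ∉ s → f x = 0) : Integrable f μ :=
  (Measure.integrableOn_of_bounded (M := C) hs hf
    (Eventually.of_forall hC)).integrable_of_forall_notMem_eq_zero h0

lemma exists_lipschitzWith_abs {n : ℕ} {u : EuclideanSpace ℝ (Fin n) → ℝ}
    (hu : ContDiff ℝ 1 u) (hs : HasCompactSupport u) : ∃ L, LipschitzWith L fun x => |u x| := by
  obtain ⟨L, hL⟩ := hu.lipschitzWith_of_hasCompactSupport hs one_ne_zero
  have h := (lipschitzWith_one_norm (E := ℝ)).comp hL
  exact ⟨_, h⟩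

variable {n : ℕ} {A : Fin n → ℝ} {u : EuclideanSpace ℝ (Fin n) → ℝ}

lemma tendsto_shift_div {V : ℝ → ℝ} (hV : Antitone V) {p q r : ℝ} (hpq : p.HolderConjugate q)
    (h : DifferentiableAt ℝ V r) :
    Tendsto (fun t => (V (r - t * |deriv V r| ^ (p - 1)) - V r) / t -
      (|deriv V r| ^ (p - 1)) ^ q / q) (𝓝[>] 0) (𝓝 (|deriv V r| ^ p / p)) := by
  set d := deriv V r with hd
  have hd0 : d ≤ 0 := hV.deriv_nonpos
  set z := |d| ^ (p - 1) with hz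
  have h1 : HasDerivAt (fun t : ℝ => V (r - t * z)) (d * -z) 0 := by
    have h2 : HasDerivAt (fun t : ℝ => r - t * z) (-z) 0 := by
      simpa using ((hasDerivAt_id (0 : ℝ)).mul_const z).const_sub r
    have h3 : HasDerivAt V d (r - 0 * z) := by
      rw [zero_mul, sub_zero]
      exact h.hasDerivAt
    exact h3.comp 0 h2
  have h4 := (h1.tendsto_slope_zero_right).sub_const (z ^ q / q)
  have e : d * -z - z ^ q / q = |d| ^ p / p := by
    have e1 : d * -z = |d| ^ p := by
      rw [hz, abs_of_nonpos hd0]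
      rcases hd0.eq_or_lt with h0 | h0
      · simp [h0, zero_rpow hpq.pos.ne']
      · have h0' : 0 < -d := by linarith
        rw [mul_neg, ← neg_mul, ← rpow_one_add' h0'.le (by simpa using hpq.pos.ne')]
        simp
    have e2 : z ^ q = |d| ^ p := by
      rw [hz, ← rpow_mul (abs_nonneg _), hpq.sub_one_mul_conj]
    rw [e1, e2]
    have := hpq.inv_add_inv_eq_one
    have h3 : q⁻¹ = 1 - p⁻¹ := by linarith
    rw [div_eq_mul_inv, h3, div_eq_mul_inv]; ring
  rw [e] at h4
  refine h4.congr fun t => ?_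
  simp [div_eq_inv_mul]

lemma radialMeasure_Iio_ne_top {D : ℝ} (hD : 0 < D) {R : ℝ} (hR : 0 ≤ R) :
    radialMeasure D (Iio R) ≠ ∞ := by
  rw [radialMeasure_Iio hD hR]; exact ENNReal.ofReal_ne_top

lemma deriv_eq_zero_of_forall_gt {V : ℝ → ℝ} {R : ℝ} (h : ∀ r, R ≤ r → V r = 0) {r : ℝ}
    (hr : R < r) : deriv V r = 0 := by
  have : V =ᶠ[𝓝 r] fun _ => 0 := by
    filter_upwards [lt_mem_nhds hr] with x hx using h x hx.le
  rw [this.deriv_eq]; simp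

lemma integral_deriv_coneRearrangement_le_add (hA : ∀ i, 0 ≤ A i) (hD : 0 < monDim A) {p q : ℝ}
    (hpq : p.HolderConjugate q) (hu : ContDiff ℝ 1 u) (hs : HasCompactSupport u)
    {ε η R : ℝ} (hε : 0 ≤ ε) (hη0 : 0 < η)
    (hη : ∀ x w, ‖w - x‖ < η → ‖fderiv ℝ u w‖ ≤ ‖fderiv ℝ u x‖ + ε)
    (hR : ∀ x, ∀ y, u y ≠ 0 → ‖x - y‖ < η → x ∈ Metric.ball 0 R) :
    coneBeta A * ∫ r, |deriv (coneRearrangement A fun x => |u x|) r| ^ p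
        ∂radialMeasure (monDim A) ≤
      ∫ x, (Metric.ball 0 R).indicator (fun x => (‖fderiv ℝ u x‖ + ε) ^ p) x ∂coneMeasure A := by
  have hp := hpq.pos
  have hq := hpq.symm.pos
  have hβ := coneBeta_pos hA
  set μ := coneMeasure A with hμ
  set ν := radialMeasure (monDim A) with hν
  set v : EuclideanSpace ℝ (Fin n) → ℝ := fun x => |u x| with hv
  have hvc : Continuous v := hu.continuous.abs
  have hvs : HasCompactSupport v := hs.comp_left (g := fun y => |y|) abs_zero
  set V := coneRearrangement A v with hVdef
  have hVa : Antitone V := antitone_coneRearrangement hA hD hvc hvs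
  obtain ⟨L, hL⟩ := exists_lipschitzWith_abs hu hs
  have hVL : LipschitzWith L V := lipschitzWith_coneRearrangement hA hD hL hvs
  have hV0 : ∀ r, 0 ≤ V r := coneRearrangement_nonneg
  have hVle : ∀ r, ∀ r', V r - V r' ≤ L * |r - r'| := fun r r' =>
    (le_abs_self _).trans (by simpa [Real.dist_eq] using hVL.dist_le_mul r r')
  set R0 := coneRadius A {x | 0 < v x} with hR0
  have hR00 : 0 ≤ R0 := coneRadius_nonneg _
  have hVz : ∀ r, R0 ≤ r → V r = 0 := fun r hr => coneRearrangement_eq_zero hA hD hvc hvs hr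
  have hdz : ∀ r, R0 < r → deriv V r = 0 := fun r hr => deriv_eq_zero_of_forall_gt hVz hr
  set z : ℝ → ℝ := fun r => |deriv V r| ^ (p - 1) with hz
  have hp1 : 0 < p - 1 := by linarith [hpq.lt]
  have hzm : Measurable z := ((measurable_deriv V).norm).pow_const _
  have hz0 : ∀ r, 0 ≤ z r := fun r => by positivity
  set Z : ℝ := (L : ℝ) ^ (p - 1) with hZ
  have hzZ : ∀ r, z r ≤ Z := fun r =>
    rpow_le_rpow (abs_nonneg _) (norm_deriv_le_of_lipschitz hVL) hp1.le
  have hZ0 : 0 ≤ Z := (hz0 0).trans (hzZ 0)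
  have hzz : ∀ r, R0 < r → z r = 0 := fun r hr => by simp [hz, hdz r hr, zero_rpow hp1.ne']
  have hnotin : ∀ r, r ∉ Iio (R0 + 1) → R0 < r := fun r hr => by
    simp only [mem_Iio, not_lt] at hr; linarith
  have hνf : ν (Iio (R0 + 1)) ≠ ∞ := radialMeasure_Iio_ne_top hD (by positivity)
  set g : EuclideanSpace ℝ (Fin n) → ℝ :=
    (Metric.ball 0 R).indicator (fun x => (‖fderiv ℝ u x‖ + ε) ^ p) with hg
  have hdc : Continuous fun x => (‖fderiv ℝ u x‖ + ε) ^ p := by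
    refine Continuous.rpow_const ?_ fun x => Or.inr hp.le
    exact (hu.continuous_fderiv one_ne_zero).norm.add continuous_const
  have hgm : Measurable g := hdc.measurable.indicator Metric.isOpen_ball.measurableSet
  have hg0 : ∀ x, 0 ≤ g x := fun x => indicator_nonneg (fun x _ => by positivity) x
  obtain ⟨M, hM⟩ := (hu.continuous_fderiv one_ne_zero).bounded_above_of_compact_support
    (hs.fderiv ℝ)
  have hgi : Integrable g μ := by
    refine integrable_of_bounded_of_eq_zero (s := Metric.ball 0 R) (C := (M + ε) ^ p)
      (coneMeasure_lt_top hA Metric.isBounded_ball).ne hgm.aestronglyMeasurable (fun x => ?_)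
      fun x hx => indicator_of_notMem hx _
    rw [abs_of_nonneg (hg0 x)]
    have hM0 : 0 ≤ M := (norm_nonneg _).trans (hM 0)
    by_cases hx : x ∈ Metric.ball 0 R
    · rw [hg, indicator_of_mem hx]
      exact rpow_le_rpow (by positivity) (by linarith [hM x]) hp.le
    · rw [hg, indicator_of_notMem hx]
      positivity
  obtain ⟨M', hM'⟩ := hvc.bounded_above_of_compact_support hvs
  have hvi : Integrable v μ := integrable_of_bounded_of_eq_zero (s := tsupport v)
    (coneMeasure_lt_top hA hvs.isCompact.isBounded).ne hvc.measurable.aestronglyMeasurable hM'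
    fun x hx => image_eq_zero_of_notMem_tsupport hx
  have hVm : Measurable V := hVa.measurable
  have hVM : ∀ r, V r ≤ V 0 + L * R0 := fun r => by
    rcases le_total r 0 with h | h
    · have : V r = V 0 := by
        simp [hVdef, coneRearrangement, max_eq_right h]
      rw [this]
      have : 0 ≤ (L : ℝ) * R0 := by positivity
      linarith
    · have := hVa h
      have : 0 ≤ (L : ℝ) * R0 := by positivity
      linarith
  have hVi : Integrable V ν := integrable_of_bounded_of_eq_zero hνf hVm.aestronglyMeasurable
    (fun r => by rw [abs_of_nonneg (hV0 r)]; exact hVM r) fun r hr => hVz r (hnotin r hr).le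
  have hVv : ∫ x, v x ∂μ = coneBeta A * ∫ r, V r ∂ν := by
    have h := lintegral_rpow_coneRearrangement hA hD hvc (fun x => abs_nonneg (u x)) hvs one_pos
    simp only [rpow_one] at h
    rw [integral_eq_lintegral_of_nonneg_ae (Eventually.of_forall fun x => abs_nonneg (u x))
      hvc.measurable.aestronglyMeasurable, integral_eq_lintegral_of_nonneg_ae
      (Eventually.of_forall hV0) hVm.aestronglyMeasurable, hμ, hν, h, ENNReal.toReal_mul,
      ENNReal.toReal_ofReal hβ.le]
  set F : ℝ → ℝ → ℝ := fun t r => (V (r - t * z r) - V r) / t - z r ^ q / q with hF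
  have hFm : ∀ t, Measurable (F t) := fun t => by
    have h1 : Measurable fun r => V (r - t * z r) := hVm.comp (measurable_id.sub (hzm.const_mul t))
    have h2 : Measurable fun r => z r ^ q / q := by fun_prop
    exact ((h1.sub hVm).div_const t).sub h2
  have hFz : ∀ t r, R0 < r → F t r = 0 := fun t r hr => by
    simp [hF, hzz r hr, zero_rpow hq.ne']
  have hFb : ∀ t, 0 < t → ∀ r, |F t r| ≤ L * Z + Z ^ q / q := fun t ht r => by
    have h1 : 0 ≤ (V (r - t * z r) - V r) / t := by
      refine div_nonneg (sub_nonneg.2 (hVa ?_)) ht.le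
      nlinarith [hz0 r]
    have h2 : (V (r - t * z r) - V r) / t ≤ L * Z := by
      rw [div_le_iff₀ ht]
      have h3 := hVle (r - t * z r) r
      rw [sub_sub_cancel_left, abs_neg, abs_of_nonneg (mul_nonneg ht.le (hz0 r))] at h3
      have h4 : (L : ℝ) * (t * z r) ≤ L * (t * Z) := by
        gcongr
        exact hzZ r
      linarith
    have h3 : 0 ≤ z r ^ q / q := div_nonneg (rpow_nonneg (hz0 r) _) hq.le
    have h4 : z r ^ q / q ≤ Z ^ q / q := by
      gcongr
      exact hzZ r
    rw [abs_le]
    constructor <;> simp only [hF] <;> linarith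
  have hFi : ∀ t, 0 < t → Integrable (F t) ν := fun t ht =>
    integrable_of_bounded_of_eq_zero hνf (hFm t).aestronglyMeasurable (hFb t ht)
      fun r hr => hFz t r (hnotin r hr)
  have hlim : Tendsto (fun t => ∫ r, F t r ∂ν) (𝓝[>] 0) (𝓝 (∫ r, |deriv V r| ^ p / p ∂ν)) := by
    refine tendsto_integral_filter_of_dominated_convergence
      ((Iio (R0 + 1)).indicator fun _ => L * Z + Z ^ q / q)
      (Eventually.of_forall fun t => (hFm t).aestronglyMeasurable) ?_ ?_ ?_
    · filter_upwards [self_mem_nhdsWithin] with t ht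
      refine Eventually.of_forall fun r => ?_
      by_cases hr : r ∈ Iio (R0 + 1)
      · rw [indicator_of_mem hr]
        exact hFb t ht r
      · rw [indicator_of_notMem hr, hFz t r (hnotin r hr), norm_zero]
    · exact (integrable_indicator_iff measurableSet_Iio).2 (integrableOn_const hνf)
    · filter_upwards [ae_radialMeasure_of_ae hVL.ae_differentiableAt_real] with r hr
      exact tendsto_shift_div hVa hpq hr
  have hbound : ∀ᶠ t in 𝓝[>] (0 : ℝ), ∫ r, F t r ∂ν ≤ (coneBeta A)⁻¹ * ((∫ x, g x ∂μ) / p) := by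
    have ht2 : ∀ᶠ t in 𝓝[>] (0 : ℝ), t * Z < η := by
      have : Tendsto (fun t : ℝ => t * Z) (𝓝[>] 0) (𝓝 0) := by
        have h : Tendsto (fun t : ℝ => t * Z) (𝓝 0) (𝓝 (0 * Z)) :=
          (continuous_id.mul continuous_const).tendsto 0
        rw [zero_mul] at h
        exact h.mono_left nhdsWithin_le_nhds
      exact this.eventually (gt_mem_nhds hη0)
    filter_upwards [self_mem_nhdsWithin, ht2] with t (ht : 0 < t) ht2
    have h1 := lintegral_coneRearrangement_shift_le hA hD hpq hu hs hε hη hR hzm hz0 hzZ ht ht2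
    set Y : ℝ → ℝ := fun r => V (r - t * z r) - t * (z r ^ q / q) with hY
    have hYF : Y = fun r => V r + t * F t r := by
      ext r
      simp only [hY, hF]
      field_simp
      ring
    have hYi : Integrable Y ν := by
      rw [hYF]
      exact hVi.add ((hFi t ht).const_mul t)
    have hE : ∀ x, |u x| + (Metric.ball 0 R).indicator
        (fun x => t * ((‖fderiv ℝ u x‖ + ε) ^ p / p)) x = v x + t / p * g x := by
      intro x
      by_cases hx : x ∈ Metric.ball 0 R
      · simp only [hg, indicator_of_mem hx, hv]; ring
      · simp only [hg, indicator_of_notMem hx, hv]; ring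
    simp_rw [hE] at h1
    have hEi : Integrable (fun x => v x + t / p * g x) μ := hvi.add (hgi.const_mul _)
    have hE0 : ∀ x, 0 ≤ v x + t / p * g x := fun x =>
      add_nonneg (abs_nonneg _) (mul_nonneg (by positivity) (hg0 x))
    rw [← ofReal_integral_eq_lintegral_ofReal hEi (Eventually.of_forall hE0)] at h1
    have h2 : ENNReal.ofReal (∫ r, Y r ∂ν) ≤ ∫⁻ r, ENNReal.ofReal (Y r) ∂ν := by
      have h3 : ∫ r, Y r ∂ν ≤ ∫ r, max (Y r) 0 ∂ν :=
        integral_mono hYi hYi.pos_part fun r => le_max_left _ _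
      refine (ENNReal.ofReal_le_ofReal h3).trans ?_
      rw [ofReal_integral_eq_lintegral_ofReal hYi.pos_part
        (Eventually.of_forall fun r => le_max_right _ _)]
      refine lintegral_mono fun r => ?_
      rw [ENNReal.ofReal_max, ENNReal.ofReal_zero, max_eq_left zero_le]
    have h3 : coneBeta A * ∫ r, Y r ∂ν ≤ ∫ x, (v x + t / p * g x) ∂μ := by
      have h4 : ENNReal.ofReal (coneBeta A) * ENNReal.ofReal (∫ r, Y r ∂ν) ≤ _ :=
        (mul_le_mul_right h2 _).trans h1
      rw [← ENNReal.ofReal_mul hβ.le] at h4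
      exact (ENNReal.ofReal_le_ofReal_iff (integral_nonneg hE0)).1 h4
    rw [hYF, integral_add hVi ((hFi t ht).const_mul t), integral_add hvi (hgi.const_mul _),
      integral_const_mul, integral_const_mul, hVv] at h3
    rw [le_inv_mul_iff₀ hβ]
    have h5 : t * (coneBeta A * ∫ r, F t r ∂ν) ≤ t * ((∫ x, g x ∂μ) / p) := by
      have : t / p * ∫ x, g x ∂μ = t * ((∫ x, g x ∂μ) / p) := by ring
      linarith
    exact le_of_mul_le_mul_left h5 ht
  have hfinal := le_of_tendsto hlim hbound
  rw [integral_div, le_inv_mul_iff₀ hβ, ← mul_div_assoc] at hfinal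
  exact (div_le_div_iff_of_pos_right hp).1 hfinal

/-- Pólya–Szegő inequality on the cone. -/
lemma integral_deriv_coneRearrangement_le (hA : ∀ i, 0 ≤ A i) (hD : 0 < monDim A) {p q : ℝ}
    (hpq : p.HolderConjugate q) (hu : ContDiff ℝ 1 u) (hs : HasCompactSupport u) :
    coneBeta A * ∫ r, |deriv (coneRearrangement A fun x => |u x|) r| ^ p
        ∂radialMeasure (monDim A) ≤ ∫ x, ‖fderiv ℝ u x‖ ^ p ∂coneMeasure A := by
  have hp := hpq.pos
  have hdc := hu.continuous_fderiv one_ne_zero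
  have huc := (hs.fderiv ℝ).uniformContinuous_of_continuous hdc
  obtain ⟨M, hM⟩ := hdc.bounded_above_of_compact_support (hs.fderiv ℝ)
  have hM0 : 0 ≤ M := (norm_nonneg _).trans (hM 0)
  obtain ⟨R, hRs⟩ := hs.isCompact.isBounded.subset_ball 0
  set G : ℝ → EuclideanSpace ℝ (Fin n) → ℝ := fun ε =>
    (Metric.ball 0 (R + 1)).indicator (fun x => (‖fderiv ℝ u x‖ + ε) ^ p) with hG
  have hfin := (coneMeasure_lt_top hA (Metric.isBounded_ball
    (x := (0 : EuclideanSpace ℝ (Fin n))) (r := R + 1))).ne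
  have h1 : ∀ᶠ ε in 𝓝[>] (0 : ℝ), coneBeta A *
      ∫ r, |deriv (coneRearrangement A fun x => |u x|) r| ^ p ∂radialMeasure (monDim A) ≤
      ∫ x, G ε x ∂coneMeasure A := by
    filter_upwards [self_mem_nhdsWithin] with ε (hε : 0 < ε)
    obtain ⟨δ, hδ, h⟩ := Metric.uniformContinuous_iff.1 huc ε hε
    refine integral_deriv_coneRearrangement_le_add hA hD hpq hu hs (η := min δ 1) hε.le
      (by positivity) (fun x w hw => ?_) fun x y hy hxy => ?_
    · have h2 := h (a := w) (b := x) (by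
        rw [dist_eq_norm]; exact hw.trans_le (min_le_left _ _))
      rw [dist_eq_norm] at h2
      linarith [norm_sub_norm_le (fderiv ℝ u w) (fderiv ℝ u x)]
    · have h2 := hRs (subset_tsupport u hy)
      rw [mem_ball_zero_iff] at h2 ⊢
      have h3 := hxy.trans_le (min_le_right δ 1)
      linarith [norm_sub_norm_le x y]
  have h2 : Tendsto (fun ε => ∫ x, G ε x ∂coneMeasure A) (𝓝[>] 0)
      (𝓝 (∫ x, ‖fderiv ℝ u x‖ ^ p ∂coneMeasure A)) := by
    have hcont : ∀ ε, Continuous fun x => ‖fderiv ℝ u x‖ + ε := fun ε =>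
      hdc.norm.add continuous_const
    refine tendsto_integral_filter_of_dominated_convergence
      ((Metric.ball 0 (R + 1)).indicator fun _ => (M + 1) ^ p)
      (Eventually.of_forall fun ε => ?_) ?_ ?_ ?_
    · exact (((hcont ε).rpow_const fun x => Or.inr hp.le).measurable.indicator
        Metric.isOpen_ball.measurableSet).aestronglyMeasurable
    · have hlt : ∀ᶠ ε in 𝓝[>] (0 : ℝ), ε < 1 :=
        nhdsWithin_le_nhds (gt_mem_nhds zero_lt_one)
      filter_upwards [self_mem_nhdsWithin, hlt] with ε (hε : 0 < ε) hε1
      refine Eventually.of_forall fun x => ?_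
      by_cases hx : x ∈ Metric.ball 0 (R + 1)
      · simp only [hG, indicator_of_mem hx]
        rw [Real.norm_of_nonneg (by positivity)]
        exact rpow_le_rpow (by positivity) (by linarith [hM x]) hp.le
      · simp [hG, indicator_of_notMem hx]
    · exact (integrable_indicator_iff Metric.isOpen_ball.measurableSet).2 (integrableOn_const hfin)
    · refine Eventually.of_forall fun x => ?_
      by_cases hx : x ∈ Metric.ball 0 (R + 1)
      · simp only [hG, indicator_of_mem hx]
        have : Tendsto (fun ε : ℝ => (‖fderiv ℝ u x‖ + ε) ^ p) (𝓝 0)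
            (𝓝 ((‖fderiv ℝ u x‖ + 0) ^ p)) :=
          ((continuous_const.add continuous_id).rpow_const fun _ => Or.inr hp.le).tendsto 0
        rw [add_zero] at this
        exact this.mono_left nhdsWithin_le_nhds
      · have h0 : fderiv ℝ u x = 0 := by
          have : x ∉ tsupport u := fun h => hx ((hRs.trans (Metric.ball_subset_ball (by simp))) h)
          exact fderiv_of_notMem_tsupport ℝ this
        simp [hG, indicator_of_notMem hx, h0, zero_rpow hp.ne']
  exact ge_of_tendsto h2 h1

end PolyaSzegoLimit

section Transport

open Set
open scoped Topology

lemma primitive_bijOn {f : ℝ → ℝ} {a : ℝ} (ha : 0 < a) (hf : ContinuousOn f (Icc 0 a))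
    (hf0 : ∀ x ∈ Ioo 0 a, 0 < f x) :
    BijOn (fun x => ∫ t in 0..x, f t) (Ioo 0 a) (Ioo 0 (∫ t in 0..a, f t)) ∧
      StrictMonoOn (fun x => ∫ t in 0..x, f t) (Ioo 0 a) ∧
      ∀ x ∈ Ioo 0 a, HasDerivAt (fun x => ∫ t in 0..x, f t) (f x) x := by
  set F : ℝ → ℝ := fun x => ∫ t in 0..x, f t with hF
  have hi : IntervalIntegrable f volume 0 a := by
    apply ContinuousOn.intervalIntegrable
    rwa [uIcc_of_le ha.le]
  have hc : ContinuousOn F (Icc 0 a) := by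
    have := intervalIntegral.continuousOn_primitive_interval' hi (left_mem_uIcc (a := 0) (b := a))
    rwa [uIcc_of_le ha.le] at this
  have hd : ∀ x ∈ Ioo 0 a, HasDerivAt F (f x) x := fun x hx => by
    have hn : Icc 0 a ∈ 𝓝 x := Icc_mem_nhds hx.1 hx.2
    refine intervalIntegral.integral_hasDerivAt_right (hi.mono_set ?_)
      ((hf.stronglyMeasurableAtFilter_nhdsWithin measurableSet_Icc x).filter_mono ?_)
      (hf.continuousAt hn)
    · rw [uIcc_of_le ha.le, uIcc_of_le hx.1.le]
      exact Icc_subset_Icc_right hx.2.le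
    · rw [nhdsWithin_eq_nhds.2 hn]
  have hm : StrictMonoOn F (Icc 0 a) := by
    refine strictMonoOn_of_deriv_pos (convex_Icc 0 a) hc fun x hx => ?_
    rw [interior_Icc] at hx
    rw [(hd x hx).deriv]
    exact hf0 x hx
  have h0 : F 0 = 0 := by simp [hF]
  have l0 : (0 : ℝ) ∈ Icc 0 a := left_mem_Icc.2 ha.le
  have la : a ∈ Icc 0 a := right_mem_Icc.2 ha.le
  refine ⟨⟨fun x hx => ⟨?_, ?_⟩, (hm.mono Ioo_subset_Icc_self).injOn, fun y hy => ?_⟩,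
    hm.mono Ioo_subset_Icc_self, hd⟩
  · rw [← h0]; exact hm l0 (Ioo_subset_Icc_self hx) hx.1
  · exact hm (Ioo_subset_Icc_self hx) la hx.2
  · have h1 : y ∈ Icc (F 0) (F a) := by rw [h0]; exact Ioo_subset_Icc_self hy
    obtain ⟨x, hx, rfl⟩ := intermediate_value_Icc ha.le hc h1
    refine ⟨x, ⟨lt_of_le_of_ne hx.1 ?_, lt_of_le_of_ne hx.2 ?_⟩, rfl⟩
    · rintro rfl
      rw [h0] at hy
      exact lt_irrefl _ hy.1
    · rintro rfl
      exact lt_irrefl _ hy.2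

lemma exists_monotone_transport {f w : ℝ → ℝ} {a b : ℝ} (ha : 0 < a) (hb : 0 < b)
    (hf : ContinuousOn f (Icc 0 a)) (hf0 : ∀ x ∈ Ioo 0 a, 0 < f x)
    (hw : ContinuousOn w (Icc 0 b)) (hw0 : ∀ x ∈ Ioo 0 b, 0 < w x)
    (heq : ∫ t in 0..a, f t = ∫ t in 0..b, w t) :
    ∃ T : ℝ → ℝ, BijOn T (Ioo 0 a) (Ioo 0 b) ∧
      ∀ x ∈ Ioo 0 a, HasDerivAt T (f x / w (T x)) x := by
  obtain ⟨bF, mF, dF⟩ := primitive_bijOn ha hf hf0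
  obtain ⟨bW, mW, dW⟩ := primitive_bijOn hb hw hw0
  rw [heq] at bF
  set F : ℝ → ℝ := fun x => ∫ t in 0..x, f t
  set W : ℝ → ℝ := fun x => ∫ t in 0..x, w t
  set M := ∫ t in 0..b, w t
  set S := Function.invFunOn W (Ioo 0 b)
  have hinv : InvOn S W (Ioo 0 b) (Ioo 0 M) := bW.invOn_invFunOn
  have bS : BijOn S (Ioo 0 M) (Ioo 0 b) := bW.symm hinv.symm
  have mS : StrictMonoOn S (Ioo 0 M) := by
    intro x hx y hy hxy
    rw [← mW.lt_iff_lt (bS.mapsTo hx) (bS.mapsTo hy), hinv.2 hx, hinv.2 hy]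
    exact hxy
  have dS : ∀ y ∈ Ioo 0 M, HasDerivAt S (w (S y))⁻¹ y := by
    intro y hy
    have hn : Ioo 0 M ∈ 𝓝 y := Ioo_mem_nhds hy.1 hy.2
    have hSy := bS.mapsTo hy
    refine HasDerivAt.of_local_left_inverse (f := W) ?_ (dW _ hSy) (hw0 _ hSy).ne' ?_
    · refine continuousAt_of_monotoneOn_of_image_mem_nhds mS.monotoneOn hn ?_
      rw [bS.image_eq]
      exact Ioo_mem_nhds hSy.1 hSy.2
    · filter_upwards [hn] with z hz using hinv.2 hz
  refine ⟨S ∘ F, bS.comp bF, fun x hx => ?_⟩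
  have := (dS (F x) (bF.mapsTo hx)).comp x (dF x hx)
  rwa [inv_mul_eq_div] at this

end Transport

section Bliss

open Set
open scoped ENNReal NNReal Topology

lemma mul_le_of_transport {D P c v r T m : ℝ} (hD : 1 < D) (hc : 0 < c) (hv : 0 < v) (hr : 0 < r)
    (hT : 0 < T) (hm : 0 < m) :
    m * (c * v ^ P * r ^ (D - 1)) ≤ 1 / D * c ^ (1 - 1 / D) * (v ^ (P * (1 - 1 / D)) *
      ((D - 1) * r ^ (D - 2) * T + r ^ (D - 1) *
        (c * v ^ P * r ^ (D - 1) / (m ^ (-D) * T ^ (D - 1))))) := by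
  have hD0 : 0 < D := by linarith
  set X := c * v ^ P with hX
  have hX0 : 0 < X := by positivity
  set T' := X * r ^ (D - 1) / (m ^ (-D) * T ^ (D - 1)) with hT'
  have hT'0 : 0 < T' := by positivity
  have h1 := geom_mean_le_arith_mean2_weighted (w₁ := 1 / D) (w₂ := (D - 1) / D) (p₁ := T')
    (p₂ := T / r) (by positivity) (div_nonneg (by linarith) hD0.le) hT'0.le (by positivity)
    (by field_simp; ring)
  have h2 : T' ^ (1 / D) * (T / r) ^ ((D - 1) / D) = X ^ (1 / D) * m := by
    have e1 : (T / r) ^ ((D - 1) / D) = ((T / r) ^ (D - 1)) ^ (1 / D) := by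
      rw [← rpow_mul (by positivity), mul_one_div]
    have e2 : T' * (T / r) ^ (D - 1) = X * m ^ D := by
      rw [hT', div_rpow hT.le hr.le, rpow_neg hm.le]
      field_simp
    rw [e1, ← mul_rpow hT'0.le (by positivity), e2, mul_rpow hX0.le (by positivity),
      ← rpow_mul hm.le, mul_one_div_cancel hD0.ne', rpow_one]
  rw [h2] at h1
  have h3 := mul_le_mul_of_nonneg_left h1 (by positivity : 0 ≤ X ^ (1 - 1 / D) * r ^ (D - 1))
  have e3 : X ^ (1 - 1 / D) * X ^ (1 / D) = X := by
    rw [← rpow_add hX0, sub_add_cancel, rpow_one]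
  have e4 : X ^ (1 - 1 / D) = c ^ (1 - 1 / D) * v ^ (P * (1 - 1 / D)) := by
    rw [hX, mul_rpow hc.le (by positivity), ← rpow_mul hv.le]
  have e5 : r ^ (D - 1) = r ^ (D - 2) * r := by
    rw [← rpow_add_one hr.ne']; congr 1; ring
  calc m * (X * r ^ (D - 1)) = X ^ (1 - 1 / D) * r ^ (D - 1) * (X ^ (1 / D) * m) := by
        nth_rw 1 [← e3]; ring
    _ ≤ _ := h3
    _ = _ := by
        rw [e4]
        have : r ^ (D - 1) * ((D - 1) / D * (T / r)) = (D - 1) / D * r ^ (D - 2) * T := by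
          rw [e5]; field_simp
        rw [mul_add, mul_assoc _ (r ^ (D - 1)) ((D - 1) / D * (T / r)), this]
        ring

lemma lipschitzOnWith_rpow_comp {V : ℝ → ℝ} {L : ℝ≥0} (hV : LipschitzWith L V) {M θ : ℝ}
    (h0 : ∀ r, 0 ≤ V r) (hM : ∀ r, V r ≤ M) (hθ : 1 ≤ θ) :
    ∃ K, LipschitzWith K fun r => V r ^ θ := by
  have hc : ContDiff ℝ 1 fun x : ℝ => x ^ θ :=
    contDiff_rpow_const_of_le (by simpa using hθ)
  obtain ⟨K, hK⟩ := hc.contDiffOn.exists_lipschitzOnWith one_ne_zero (convex_Icc (0 : ℝ) M)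
    isCompact_Icc
  refine ⟨K * L, ?_⟩
  rw [← lipschitzOnWith_univ]
  exact hK.comp hV.lipschitzOnWith fun r _ => ⟨h0 r, hM r⟩

lemma integral_rpow_mul_deriv_le {V : ℝ → ℝ} {L : ℝ≥0} (hV : LipschitzWith L V) {M θ : ℝ}
    (h0 : ∀ r, 0 ≤ V r) (hM : ∀ r, V r ≤ M) (hθ : 1 ≤ θ) {g g' : ℝ → ℝ} {a ε b : ℝ}
    (hg : ∀ r ∈ Ioo 0 a, HasDerivAt g (g' r) r) (hg' : ContinuousOn g' (Ioo 0 a))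
    (hg0 : ∀ r ∈ Ioo 0 a, 0 ≤ g r) (hε : 0 < ε) (hεb : ε ≤ b) (hb : b < a) :
    ∫ r in ε..b, V r ^ θ * g' r ≤
      V b ^ θ * g b + θ * ∫ r in ε..b, V r ^ (θ - 1) * |deriv V r| * g r := by
  have hsub : uIcc ε b ⊆ Ioo 0 a := by
    rw [uIcc_of_le hεb]
    exact fun x hx => ⟨hε.trans_le hx.1, hx.2.trans_lt hb⟩
  obtain ⟨K, hK⟩ := lipschitzOnWith_rpow_comp hV h0 hM hθ
  have hac1 : AbsolutelyContinuousOnInterval (fun r => V r ^ θ) ε b :=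
    hK.lipschitzOnWith.absolutelyContinuousOnInterval
  have hgc : ContinuousOn g (uIcc ε b) := fun r hr =>
    (hg r (hsub hr)).continuousAt.continuousWithinAt
  have hac2 : AbsolutelyContinuousOnInterval g ε b := by
    obtain ⟨C, hC⟩ := isCompact_uIcc.exists_bound_of_continuousOn (hg'.mono hsub)
    have hC' : ∀ x ∈ uIcc ε b, ‖g' x‖₊ ≤ C.toNNReal := fun x hx => by
      rw [← NNReal.coe_le_coe, coe_nnnorm]
      exact (hC x hx).trans (le_coe_toNNReal C)
    exact ((convex_uIcc ε b).lipschitzOnWith_of_nnnorm_hasDerivWithin_le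
      (fun x hx => (hg x (hsub hx)).hasDerivWithinAt) hC').absolutelyContinuousOnInterval
  have h1 := hac1.integral_mul_deriv_eq_deriv_mul hac2
  have e1 : ∫ r in ε..b, V r ^ θ * deriv g r = ∫ r in ε..b, V r ^ θ * g' r := by
    refine intervalIntegral.integral_congr fun r hr => ?_
    simp only [(hg r (hsub hr)).deriv]
  have e2 : ∫ r in ε..b, deriv (fun r => V r ^ θ) r * g r =
      ∫ r in ε..b, θ * (V r ^ (θ - 1) * deriv V r * g r) := by
    refine intervalIntegral.integral_congr_ae ?_
    filter_upwards [hV.ae_differentiableAt_real] with r hr _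
    rw [(hr.hasDerivAt.rpow_const (Or.inr hθ)).deriv]
    ring
  rw [e1, e2, intervalIntegral.integral_const_mul] at h1
  have hm : ∀ h : ℝ → ℝ, Measurable h → (∀ r, |h r| ≤ L) →
      IntervalIntegrable (fun r => V r ^ (θ - 1) * h r * g r) volume ε b := by
    intro h hh hhL
    refine IntervalIntegrable.mul_continuousOn ?_ hgc
    refine IntervalIntegrable.continuousOn_mul (g := fun r => V r ^ (θ - 1)) ?_
      ((hV.continuous.rpow_const fun _ => Or.inr (by linarith)).continuousOn)
    rw [intervalIntegrable_iff]
    exact Measure.integrableOn_of_bounded (M := L) (by simp [uIoc])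
      hh.aestronglyMeasurable (Eventually.of_forall hhL)
  have hdL : ∀ r, |deriv V r| ≤ L := fun r => norm_deriv_le_of_lipschitz hV
  have h2 : -∫ r in ε..b, V r ^ (θ - 1) * deriv V r * g r ≤
      ∫ r in ε..b, V r ^ (θ - 1) * |deriv V r| * g r := by
    rw [← intervalIntegral.integral_neg]
    refine intervalIntegral.integral_mono_on hεb (hm _ (measurable_deriv V) hdL).neg
      (hm _ (measurable_deriv V).norm fun r => by simpa using hdL r) fun r hr => ?_
    have h3 := mul_nonneg (rpow_nonneg (h0 r) (θ - 1))
      (hg0 r (hsub (by rwa [uIcc_of_le hεb])))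
    nlinarith [neg_abs_le (deriv V r)]
  have h3 := mul_nonneg (rpow_nonneg (h0 ε) θ) (hg0 ε (hsub left_mem_uIcc))
  have h4 := mul_le_mul_of_nonneg_left h2 (zero_le_one.trans hθ)
  linarith

end Bliss

section BlissTruncated

open Set
open scoped ENNReal NNReal Topology

/-- The density of the extremal profile. -/
def blissDensity (D q r : ℝ) : ℝ := (1 + r ^ q) ^ (-D) * r ^ (D - 1)

lemma continuousOn_blissDensity {D q : ℝ} (hD : 1 ≤ D) (hq : 0 ≤ q) :
    ContinuousOn (blissDensity D q) (Ici 0) := by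
  have h1 : Continuous fun r : ℝ => r ^ q := continuous_id.rpow_const fun _ => Or.inr hq
  refine ContinuousOn.mul ?_ (continuous_id.rpow_const fun _ => Or.inr (by linarith)).continuousOn
  refine ContinuousOn.rpow_const (continuous_const.add h1).continuousOn fun r hr => Or.inl ?_
  have : 0 ≤ r ^ q := rpow_nonneg hr q
  positivity

lemma blissDensity_pos {D q r : ℝ} (hr : 0 < r) : 0 < blissDensity D q r := by
  unfold blissDensity; positivity

lemma integral_mul_rpow_le_holder {V T : ℝ → ℝ} {a p q D θ P M L N : ℝ} (hpq : p.HolderConjugate q)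
    (hD : 1 < D) (hV : Continuous V) (h0 : ∀ r, 0 ≤ V r) (hM : ∀ r, V r ≤ M)
    (hL : ∀ r, |deriv V r| ≤ L) (hT : ContinuousOn T (Ioo 0 a))
    (hTN : ∀ r ∈ Ioo 0 a, T r ∈ Ioo 0 N) (hθ : 0 ≤ θ) (hP : θ * q = P) :
    IntegrableOn (fun r => V r ^ θ * |deriv V r| * (r ^ (D - 1) * T r)) (Ioo 0 a) ∧
    ∫ r in Ioo 0 a, V r ^ θ * |deriv V r| * (r ^ (D - 1) * T r) ≤
      (∫ r in Ioo 0 a, T r ^ q * (V r ^ P * r ^ (D - 1))) ^ (1 / q) *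
        (∫ r in Ioo 0 a, |deriv V r| ^ p * r ^ (D - 1)) ^ (1 / p) := by
  have hp := hpq.pos
  have hq := hpq.symm.pos
  have hM0 : 0 ≤ M := (h0 0).trans (hM 0)
  have hL0 : 0 ≤ L := (abs_nonneg _).trans (hL 0)
  have hD1 : 0 < D - 1 := by linarith
  set f : ℝ → ℝ := fun r => V r ^ θ * (T r * r ^ ((D - 1) / q)) with hf
  set g : ℝ → ℝ := fun r => |deriv V r| * r ^ ((D - 1) / p) with hg
  have hcr : ∀ s : ℝ, 0 ≤ s → Continuous fun r : ℝ => r ^ s := fun s hs =>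
    continuous_id.rpow_const fun _ => Or.inr hs
  have hfm : AEStronglyMeasurable f (volume.restrict (Ioo 0 a)) := by
    refine ContinuousOn.aestronglyMeasurable ?_ measurableSet_Ioo
    exact (hV.rpow_const fun _ => Or.inr hθ).continuousOn.mul
      (hT.mul (hcr _ (by positivity)).continuousOn)
  have hgm : AEStronglyMeasurable g (volume.restrict (Ioo 0 a)) :=
    ((measurable_deriv V).norm.mul (hcr _ (by positivity)).measurable).aestronglyMeasurable
  have hf0 : ∀ r ∈ Ioo 0 a, 0 ≤ f r := fun r hr => by
    have := (hTN r hr).1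
    have := hr.1
    have := h0 r
    positivity
  have hg0 : ∀ r ∈ Ioo 0 a, 0 ≤ g r := fun r hr => by
    have := hr.1
    positivity
  have hfb : ∀ r ∈ Ioo 0 a, ‖f r‖ ≤ M ^ θ * (N * a ^ ((D - 1) / q)) := fun r hr => by
    rw [Real.norm_of_nonneg (hf0 r hr)]
    have h1 := (hTN r hr).1
    have h2 := (hTN r hr).2
    have h3 := hr.1
    have h4 : r ^ ((D - 1) / q) ≤ a ^ ((D - 1) / q) :=
      rpow_le_rpow hr.1.le hr.2.le (by positivity)
    have h5 : V r ^ θ ≤ M ^ θ := rpow_le_rpow (h0 r) (hM r) hθ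
    have h6 : 0 ≤ r ^ ((D - 1) / q) := by positivity
    have h7 : 0 ≤ V r ^ θ := rpow_nonneg (h0 r) _
    exact mul_le_mul h5 (mul_le_mul h2.le h4 h6 (h1.trans h2).le) (by positivity) (h7.trans h5)
  have hgb : ∀ r ∈ Ioo 0 a, ‖g r‖ ≤ L * a ^ ((D - 1) / p) := fun r hr => by
    rw [Real.norm_of_nonneg (hg0 r hr)]
    have h4 : r ^ ((D - 1) / p) ≤ a ^ ((D - 1) / p) :=
      rpow_le_rpow hr.1.le hr.2.le (by positivity)
    have := hr.1
    exact mul_le_mul (hL r) h4 (by positivity) hL0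
  have aef0 : 0 ≤ᵐ[volume.restrict (Ioo 0 a)] f := ae_restrict_of_forall_mem measurableSet_Ioo hf0
  have aeg0 : 0 ≤ᵐ[volume.restrict (Ioo 0 a)] g := ae_restrict_of_forall_mem measurableSet_Ioo hg0
  have hfl : ∀ s : ℝ≥0∞, MemLp f s (volume.restrict (Ioo 0 a)) := fun s =>
    MemLp.of_bound hfm _ (ae_restrict_of_forall_mem measurableSet_Ioo hfb)
  have hgl : ∀ s : ℝ≥0∞, MemLp g s (volume.restrict (Ioo 0 a)) := fun s =>
    MemLp.of_bound hgm _ (ae_restrict_of_forall_mem measurableSet_Ioo hgb)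
  have hfg : ∀ r ∈ Ioo 0 a,
      f r * g r = V r ^ θ * |deriv V r| * (r ^ (D - 1) * T r) := fun r hr => by
    have : r ^ (D - 1) = r ^ ((D - 1) / q) * r ^ ((D - 1) / p) := by
      rw [← rpow_add hr.1, div_eq_mul_inv, div_eq_mul_inv, ← mul_add, add_comm,
        hpq.inv_add_inv_eq_one, mul_one]
    rw [this]
    simp only [hf, hg]
    ring
  refine ⟨?_, ?_⟩
  · have : IntegrableOn (fun r => f r * g r) (Ioo 0 a) :=
      (hfl 2).integrable_mul (hgl 2)
    exact this.congr_fun hfg measurableSet_Ioo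
  · have h := integral_mul_le_Lp_mul_Lq_of_nonneg hpq.symm aef0 aeg0 (hfl _) (hgl _)
    rw [setIntegral_congr_fun measurableSet_Ioo hfg] at h
    refine h.trans (le_of_eq ?_)
    congr 2
    · refine setIntegral_congr_fun measurableSet_Ioo fun r hr => ?_
      have h1 := (hTN r hr).1
      have h3 := hr.1
      simp only [hf]
      rw [mul_rpow (rpow_nonneg (h0 r) _) (by positivity), mul_rpow h1.le (by positivity),
        ← rpow_mul (h0 r), ← rpow_mul h3.le, hP, div_mul_cancel₀ _ hq.ne']
      ring
    · refine setIntegral_congr_fun measurableSet_Ioo fun r hr => ?_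
      have h3 := hr.1
      simp only [hg]
      rw [mul_rpow (abs_nonneg _) (by positivity), ← rpow_mul h3.le, div_mul_cancel₀ _ hp.ne']

end BlissTruncated

section BlissMain

open Set
open scoped ENNReal NNReal Topology

lemma bliss_truncated {V : ℝ → ℝ} {L : ℝ≥0} {a p q D P θ M c N : ℝ} (hpq : p.HolderConjugate q)
    (hD : 1 < D) (hθ1 : 1 ≤ θ) (hPθ : P * (1 - 1 / D) = θ) (hθq : (θ - 1) * q = P)
    (hVL : LipschitzWith L V) (h0 : ∀ r, 0 ≤ V r) (hM : ∀ r, V r ≤ M)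
    (ha : 0 < a) (hpos : ∀ r, r < a → 0 < V r) (hVa : V a = 0) (hc : 0 < c) (hN : 0 < N)
    (heq : ∫ r in (0 : ℝ)..a, c * V r ^ P * r ^ (D - 1) =
      ∫ r in (0 : ℝ)..N, blissDensity D q r) :
    ∫ r in Ioo 0 N, (1 + r ^ q) * blissDensity D q r ≤
      1 / D * c ^ (1 - 1 / D) * (θ * (((∫ r in Ioo 0 N, r ^ q * blissDensity D q r) / c) ^ (1 / q) *
        (∫ r in Ioo 0 a, |deriv V r| ^ p * r ^ (D - 1)) ^ (1 / p))) := by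
  have hp := hpq.pos
  have hq := hpq.symm.pos
  have hD1 : 0 < D - 1 := by linarith
  have hP0 : 0 ≤ P := by rw [← hθq]; exact mul_nonneg (by linarith) hq.le
  have hcr : ∀ s : ℝ, 0 ≤ s → Continuous fun r : ℝ => r ^ s := fun s hs =>
    continuous_id.rpow_const fun _ => Or.inr hs
  set w := blissDensity D q with hw
  have hwc : ContinuousOn w (Ici 0) := continuousOn_blissDensity hD.le hq.le
  set f : ℝ → ℝ := fun r => c * V r ^ P * r ^ (D - 1) with hf
  have hfc : Continuous f := (continuous_const.mul
    (hVL.continuous.rpow_const fun _ => Or.inr hP0)).mul (hcr _ hD1.le)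
  have hf0 : ∀ r ∈ Ioo 0 a, 0 < f r := fun r hr => by
    have := hpos r hr.2
    have := hr.1
    positivity
  obtain ⟨T, bT, dT⟩ := exists_monotone_transport ha hN hfc.continuousOn hf0
    (hwc.mono Icc_subset_Ici_self) (fun r hr => blissDensity_pos hr.1) heq
  have hTc : ContinuousOn T (Ioo 0 a) := fun r hr =>
    (dT r hr).continuousAt.continuousWithinAt
  have hTN := bT.mapsTo
  have hwT : ∀ r ∈ Ioo 0 a, 0 < w (T r) := fun r hr => blissDensity_pos (hTN hr).1
  have habs : ∀ φ : ℝ → ℝ, ∀ r ∈ Ioo 0 a,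
      |f r / w (T r)| • (φ (T r) * w (T r)) = φ (T r) * f r := fun φ r hr => by
    rw [abs_of_pos (div_pos (hf0 r hr) (hwT r hr)), smul_eq_mul]
    have := (hwT r hr).ne'
    field_simp
  have hcov : ∀ φ : ℝ → ℝ, ∫ r in Ioo 0 N, φ r * w r = ∫ r in Ioo 0 a, φ (T r) * f r := by
    intro φ
    rw [← bT.image_eq, integral_image_eq_integral_abs_deriv_smul measurableSet_Ioo
      (fun x hx => (dT x hx).hasDerivWithinAt) bT.injOn]
    exact setIntegral_congr_fun measurableSet_Ioo (habs φ)
  have hqc := hcr q hq.le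
  have hint : IntegrableOn (fun r => (1 + T r ^ q) * f r) (Ioo 0 a) := by
    have h1 : IntegrableOn (fun r => (1 + r ^ q) * w r) (Ioo 0 N) := by
      have : ContinuousOn (fun r => (1 + r ^ q) * w r) (Icc 0 N) :=
        (continuous_const.add hqc).continuousOn.mul (hwc.mono Icc_subset_Ici_self)
      exact this.integrableOn_Icc.mono_set Ioo_subset_Icc_self
    rw [← bT.image_eq, integrableOn_image_iff_integrableOn_abs_deriv_smul measurableSet_Ioo
      (fun x hx => (dT x hx).hasDerivWithinAt) bT.injOn] at h1
    exact h1.congr_fun (habs fun r => 1 + r ^ q) measurableSet_Ioo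
  rw [hcov fun r => 1 + r ^ q, hcov fun r => r ^ q]
  set g : ℝ → ℝ := fun r => r ^ (D - 1) * T r with hg
  set g' : ℝ → ℝ := fun r => (D - 1) * r ^ (D - 2) * T r + r ^ (D - 1) * (f r / w (T r)) with hg'
  have hgd : ∀ r ∈ Ioo 0 a, HasDerivAt g (g' r) r := fun r hr => by
    have h1 := (hasDerivAt_rpow_const (x := r) (p := D - 1) (Or.inl hr.1.ne')).mul (dT r hr)
    rw [show D - 1 - 1 = D - 2 by ring] at h1
    exact h1
  have hg'c : ContinuousOn g' (Ioo 0 a) := by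
    have h1 : ContinuousOn (fun r : ℝ => r ^ (D - 2)) (Ioo 0 a) :=
      continuousOn_id.rpow_const fun r hr => Or.inl hr.1.ne'
    have h2 : ContinuousOn (fun r => w (T r)) (Ioo 0 a) :=
      hwc.comp hTc fun r hr => (hTN hr).1.le
    exact ((continuousOn_const.mul h1).mul hTc).add ((hcr _ hD1.le).continuousOn.mul
      (hfc.continuousOn.div h2 fun r hr => (hwT r hr).ne'))
  have hg0 : ∀ r ∈ Ioo 0 a, 0 ≤ g r := fun r hr => by
    have := (hTN hr).1
    have := hr.1
    positivity
  have hgb : ∀ r ∈ Ioo 0 a, g r ≤ a ^ (D - 1) * N := fun r hr =>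
    mul_le_mul (rpow_le_rpow hr.1.le hr.2.le hD1.le) (hTN hr).2.le (hTN hr).1.le (by positivity)
  obtain ⟨hXi, hXle⟩ := integral_mul_rpow_le_holder hpq hD hVL.continuous h0 hM
    (fun r => norm_deriv_le_of_lipschitz hVL) hTc hTN (θ := θ - 1) (by linarith) hθq
  set X := ∫ r in Ioo 0 a, V r ^ (θ - 1) * |deriv V r| * (r ^ (D - 1) * T r) with hX
  set C := 1 / D * c ^ (1 - 1 / D) with hC
  have hC0 : 0 ≤ C := by positivity
  set h : ℝ → ℝ := fun r => (1 + T r ^ q) * f r with hh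
  have hpt : ∀ r ∈ Ioo 0 a, h r ≤ C * (V r ^ θ * g' r) := fun r hr => by
    have hT0 := (hTN hr).1
    have := mul_le_of_transport (P := P) (m := 1 + T r ^ q) hD hc (hpos r hr.2) hr.1 hT0
      (by positivity)
    rw [hPθ] at this
    exact this
  have hstep : ∀ ε b, 0 < ε → ε ≤ b → b < a →
      ∫ r in ε..b, h r ≤ C * (V b ^ θ * (a ^ (D - 1) * N) + θ * X) := by
    intro ε b hε hεb hb
    have hsub : Icc ε b ⊆ Ioo 0 a := fun x hx => ⟨hε.trans_le hx.1, hx.2.trans_lt hb⟩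
    have hbm : b ∈ Ioo 0 a := hsub (right_mem_Icc.2 hεb)
    have h1 : ∫ r in ε..b, h r ≤ ∫ r in ε..b, C * (V r ^ θ * g' r) := by
      refine intervalIntegral.integral_mono_on hεb ?_ ?_ fun r hr => hpt r (hsub hr)
      · rw [intervalIntegrable_iff_integrableOn_Icc_of_le hεb]
        exact hint.mono_set hsub
      · refine ContinuousOn.intervalIntegrable ?_
        rw [uIcc_of_le hεb]
        exact continuousOn_const.mul ((hVL.continuous.rpow_const fun _ =>
          Or.inr (by linarith)).continuousOn.mul (hg'c.mono hsub))
    rw [intervalIntegral.integral_const_mul] at h1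
    refine h1.trans (mul_le_mul_of_nonneg_left ?_ hC0)
    refine (integral_rpow_mul_deriv_le hVL h0 hM hθ1 hgd hg'c hg0 hε hεb hb).trans ?_
    have h2 : ∫ r in ε..b, V r ^ (θ - 1) * |deriv V r| * g r ≤ X := by
      rw [intervalIntegral.integral_of_le hεb, ← integral_Icc_eq_integral_Ioc]
      refine setIntegral_mono_set hXi ?_ hsub.eventuallyLE
      refine ae_restrict_of_forall_mem measurableSet_Ioo fun r hr => ?_
      exact mul_nonneg (mul_nonneg (rpow_nonneg (h0 r) _) (abs_nonneg _)) (hg0 r hr)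
    have h3 := mul_le_mul_of_nonneg_left (hgb b hbm) (rpow_nonneg (h0 b) θ)
    have h4 := mul_le_mul_of_nonneg_left h2 (zero_le_one.trans hθ1)
    linarith
  have hlimit : ∫ r in Ioo 0 a, h r ≤ C * (θ * X) := by
    have hintc : IntegrableOn h (Icc 0 a) := (integrableOn_Icc_iff_integrableOn_Ioo (by simp) (by simp)).2 hint
    have hi : IntervalIntegrable h volume 0 a :=
      (intervalIntegrable_iff_integrableOn_Icc_of_le ha.le).2 hintc
    have hprim : ContinuousOn (fun x => ∫ r in (0 : ℝ)..x, h r) (Icc 0 a) := by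
      have := intervalIntegral.continuousOn_primitive_interval' hi (left_mem_uIcc (a := 0) (b := a))
      rwa [uIcc_of_le ha.le] at this
    have hle : ∀ᶠ δ in 𝓝[>] (0 : ℝ), 0 < δ ∧ δ ≤ a / 2 := by
      filter_upwards [self_mem_nhdsWithin, nhdsWithin_le_nhds (gt_mem_nhds (half_pos ha))]
        with δ h1 h2 using ⟨h1, le_of_lt h2⟩
    have t1 : Tendsto (fun δ : ℝ => ∫ r in (0 : ℝ)..δ, h r) (𝓝[>] 0)
        (𝓝 (∫ r in (0 : ℝ)..0, h r)) := by
      refine (hprim 0 (left_mem_Icc.2 ha.le)).tendsto.comp (tendsto_nhdsWithin_iff.2 ⟨?_, ?_⟩)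
      · exact tendsto_id.mono_left nhdsWithin_le_nhds
      · filter_upwards [hle] with δ hδ using ⟨hδ.1.le, by linarith [hδ.2]⟩
    have ta : Tendsto (fun δ : ℝ => a - δ) (𝓝[>] 0) (𝓝 a) := by
      have : Tendsto (fun δ : ℝ => a - δ) (𝓝 0) (𝓝 (a - 0)) :=
        (continuous_const.sub continuous_id).tendsto 0
      rw [sub_zero] at this
      exact this.mono_left nhdsWithin_le_nhds
    have t2 : Tendsto (fun δ : ℝ => ∫ r in (0 : ℝ)..(a - δ), h r) (𝓝[>] 0)
        (𝓝 (∫ r in (0 : ℝ)..a, h r)) := by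
      refine (hprim a (right_mem_Icc.2 ha.le)).tendsto.comp (tendsto_nhdsWithin_iff.2 ⟨ta, ?_⟩)
      filter_upwards [hle] with δ hδ using ⟨by linarith [hδ.2], by linarith [hδ.1]⟩
    have t3 : Tendsto (fun δ : ℝ => C * (V (a - δ) ^ θ * (a ^ (D - 1) * N) + θ * X)) (𝓝[>] 0)
        (𝓝 (C * (V a ^ θ * (a ^ (D - 1) * N) + θ * X))) := by
      have : Continuous fun b => C * (V b ^ θ * (a ^ (D - 1) * N) + θ * X) :=
        continuous_const.mul (((hVL.continuous.rpow_const fun _ =>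
          Or.inr (by linarith)).mul continuous_const).add continuous_const)
      exact (this.tendsto a).comp ta
    have hfin := le_of_tendsto_of_tendsto (t2.sub t1) t3 (by
      filter_upwards [hle] with δ hδ
      have hm : ∀ x ∈ Icc 0 a, IntervalIntegrable h volume 0 x := fun x hx => by
        rw [intervalIntegrable_iff_integrableOn_Icc_of_le hx.1]
        exact hintc.mono_set (Icc_subset_Icc_right hx.2)
      rw [intervalIntegral.integral_interval_sub_left
        (hm _ ⟨by linarith, by linarith⟩) (hm _ ⟨by linarith, by linarith⟩)]
      exact hstep δ (a - δ) hδ.1 (by linarith) (by linarith))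
    rw [intervalIntegral.integral_same, sub_zero, hVa, zero_rpow (by linarith), zero_mul, zero_add,
      intervalIntegral.integral_of_le ha.le, integral_Ioc_eq_integral_Ioo] at hfin
    exact hfin
  refine hlimit.trans (mul_le_mul_of_nonneg_left
    (mul_le_mul_of_nonneg_left (hXle.trans (le_of_eq ?_)) (by linarith)) hC0)
  congr 2
  rw [← integral_div]
  refine integral_congr_ae (Eventually.of_forall fun r => ?_)
  simp only [hf]
  field_simp

end BlissMain

section GammaIntegral

open Set
open scoped ENNReal NNReal Topology

lemma lintegral_rpow_mul_one_add_rpow {s q b : ℝ} (hs : 0 < s) (hq : 0 < q) (hb : s / q < b) :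
    ∫⁻ r in Ioi (0 : ℝ), ENNReal.ofReal (r ^ (s - 1) * (1 + r ^ q) ^ (-b)) =
      ENNReal.ofReal (Gamma (s / q) * Gamma (b - s / q) / (q * Gamma b)) := by
  have hb0 : 0 < b := (div_pos hs hq).trans hb
  have hΓ := Gamma_pos_of_pos hb0
  have hmeas : Measurable fun z : ℝ × ℝ => ENNReal.ofReal
      (z.1 ^ (s - 1) * (z.2 ^ (b - 1) * exp (-((1 + z.1 ^ q) * z.2)))) := by fun_prop
  have h1 : ∀ r ∈ Ioi (0 : ℝ), ENNReal.ofReal (r ^ (s - 1) * (1 + r ^ q) ^ (-b)) =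
      ENNReal.ofReal (1 / Gamma b) * ∫⁻ t in Ioi (0 : ℝ), ENNReal.ofReal
        (r ^ (s - 1) * (t ^ (b - 1) * exp (-((1 + r ^ q) * t)))) := by
    intro r hr
    have hr0 : (0 : ℝ) < r := hr
    have hr1 : 0 < 1 + r ^ q := by positivity
    have h := integral_rpow_mul_exp_neg_mul_Ioi hb0 hr1
    have hi : IntegrableOn (fun t : ℝ => t ^ (b - 1) * exp (-((1 + r ^ q) * t))) (Ioi 0) := by
      refine Integrable.of_integral_ne_zero ?_
      rw [h]
      positivity
    rw [← ofReal_integral_eq_lintegral_ofReal (hi.const_mul _), integral_const_mul, h,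
      ← ENNReal.ofReal_mul (by positivity)]
    · congr 1
      rw [one_div, one_div, inv_rpow hr1.le, rpow_neg hr1.le]
      field_simp
    · refine ae_restrict_of_forall_mem measurableSet_Ioi fun t ht => ?_
      have : (0 : ℝ) < t := ht
      positivity
  have h2 : ∀ t ∈ Ioi (0 : ℝ), ∫⁻ r in Ioi (0 : ℝ), ENNReal.ofReal
        (r ^ (s - 1) * (t ^ (b - 1) * exp (-((1 + r ^ q) * t)))) =
      ENNReal.ofReal (1 / q * Gamma (s / q)) *
        ENNReal.ofReal (t ^ (b - s / q - 1) * exp (-(1 * t))) := by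
    intro t ht
    have ht0 : (0 : ℝ) < t := ht
    have h := integral_rpow_mul_exp_neg_mul_rpow hq (show (-1 : ℝ) < s - 1 by linarith) ht0
    rw [sub_add_cancel] at h
    have hG := Gamma_pos_of_pos (div_pos hs hq)
    have hi : IntegrableOn (fun x : ℝ => x ^ (s - 1) * exp (-t * x ^ q)) (Ioi 0) := by
      refine Integrable.of_integral_ne_zero ?_
      rw [h]
      positivity
    have h3 : ∀ r : ℝ, r ^ (s - 1) * (t ^ (b - 1) * exp (-((1 + r ^ q) * t))) =
        t ^ (b - 1) * exp (-t) * (r ^ (s - 1) * exp (-t * r ^ q)) := fun r => by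
      rw [show -((1 + r ^ q) * t) = -t + -t * r ^ q by ring, exp_add]
      ring
    simp_rw [h3]
    rw [← ofReal_integral_eq_lintegral_ofReal (hi.const_mul _), integral_const_mul, h,
      ← ENNReal.ofReal_mul (by positivity)]
    · congr 1
      rw [show b - s / q - 1 = (b - 1) + -s / q by ring, rpow_add ht0, one_mul]
      ring
    · refine ae_restrict_of_forall_mem measurableSet_Ioi fun r hr => ?_
      have : (0 : ℝ) < r := hr
      positivity
  rw [setLIntegral_congr_fun measurableSet_Ioi h1, lintegral_const_mul _
    (hmeas.lintegral_prod_right'), lintegral_lintegral_swap hmeas.aemeasurable,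
    setLIntegral_congr_fun measurableSet_Ioi h2, lintegral_const_mul _ (by fun_prop)]
  have h := integral_rpow_mul_exp_neg_mul_Ioi (sub_pos.2 hb) one_pos
  have hG := Gamma_pos_of_pos (sub_pos.2 hb)
  have hG' := Gamma_pos_of_pos (div_pos hs hq)
  have hi : IntegrableOn (fun t : ℝ => t ^ (b - s / q - 1) * exp (-(1 * t))) (Ioi 0) := by
    refine Integrable.of_integral_ne_zero ?_
    rw [h]
    positivity
  rw [← ofReal_integral_eq_lintegral_ofReal hi, h, ← ENNReal.ofReal_mul (by positivity),
    ← ENNReal.ofReal_mul (by positivity)]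
  · congr 1
    simp only [div_one, one_rpow, one_mul]
    field_simp
  · refine ae_restrict_of_forall_mem measurableSet_Ioi fun t ht => ?_
    have : (0 : ℝ) < t := ht
    positivity

lemma integrableOn_rpow_mul_one_add_rpow {s q b : ℝ} (hs : 0 < s) (hq : 0 < q) (hb : s / q < b) :
    IntegrableOn (fun r : ℝ => r ^ (s - 1) * (1 + r ^ q) ^ (-b)) (Ioi 0) := by
  refine ⟨by fun_prop, ?_⟩
  rw [hasFiniteIntegral_iff_ofReal, lintegral_rpow_mul_one_add_rpow hs hq hb]
  · exact ENNReal.ofReal_lt_top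
  · refine ae_restrict_of_forall_mem measurableSet_Ioi fun t ht => ?_
    have : (0 : ℝ) < t := ht
    positivity

lemma integral_rpow_mul_one_add_rpow {s q b : ℝ} (hs : 0 < s) (hq : 0 < q) (hb : s / q < b) :
    ∫ r in Ioi (0 : ℝ), r ^ (s - 1) * (1 + r ^ q) ^ (-b) =
      Gamma (s / q) * Gamma (b - s / q) / (q * Gamma b) := by
  have h1 := Gamma_pos_of_pos (div_pos hs hq)
  have h2 := Gamma_pos_of_pos (sub_pos.2 hb)
  have h3 := Gamma_pos_of_pos ((div_pos hs hq).trans hb)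
  rw [integral_eq_lintegral_of_nonneg_ae, lintegral_rpow_mul_one_add_rpow hs hq hb,
    ENNReal.toReal_ofReal (by positivity)]
  · refine ae_restrict_of_forall_mem measurableSet_Ioi fun t ht => ?_
    have : (0 : ℝ) < t := ht
    positivity
  · fun_prop

end GammaIntegral

section BlissInequality

open Set
open scoped ENNReal NNReal Topology

lemma tendsto_setIntegral_Ioo_atTop {f : ℝ → ℝ} (hf : IntegrableOn f (Ioi 0)) :
    Tendsto (fun N : ℝ => ∫ r in Ioo 0 N, f r) atTop (𝓝 (∫ r in Ioi 0, f r)) := by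
  refine (intervalIntegral_tendsto_integral_Ioi 0 hf tendsto_id).congr' ?_
  filter_upwards [eventually_ge_atTop 0] with N hN
  rw [id, intervalIntegral.integral_of_le hN, integral_Ioc_eq_integral_Ioo]

lemma rpow_le_of_bliss_limit {D p q κ J I G : ℝ} (hpq : p.HolderConjugate q) (hD : 0 < D)
    (hκ : 0 ≤ κ) (hJ : 0 < J) (hI : 0 < I)
    (h : J ≤ 1 / D * (J / I) ^ (1 - 1 / D) * ((J * (D * κ) / (J / I)) ^ (1 / q) * G ^ (1 / p))) :
    I ^ ((D - p) / (D * p)) ≤ D ^ (-1 / p) * J ^ (-1 / D) * κ ^ (1 / q) * G ^ (1 / p) := by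
  have hp := hpq.pos
  have e1 : 1 / q = 1 - 1 / p := by
    have := hpq.inv_add_inv_eq_one
    rw [one_div, one_div]
    linarith
  have e2 : J * (D * κ) / (J / I) = I * (D * κ) := by field_simp
  rw [e2, mul_rpow hI.le (by positivity), mul_rpow hD.le hκ, div_rpow hJ.le hI.le] at h
  have e3 : J ^ (1 - 1 / D) = J * J ^ (-1 / D) := by
    rw [show 1 - 1 / D = 1 + -1 / D by ring, rpow_add hJ, rpow_one]
  have e4 : I ^ (1 / q) = I ^ (1 - 1 / D) / I ^ ((D - p) / (D * p)) := by
    rw [← rpow_sub hI]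
    congr 1
    rw [e1]
    field_simp
    ring
  have e5 : D ^ (1 / q) = D * D ^ (-1 / p) := by
    rw [show 1 / q = 1 + -1 / p by rw [e1]; ring, rpow_add hD, rpow_one]
  rw [e3, e4, e5] at h
  have p1 : 0 < I ^ (1 - 1 / D) := by positivity
  have p2 : 0 < I ^ ((D - p) / (D * p)) := by positivity
  have h2 : 1 / D * (J * J ^ (-1 / D) / I ^ (1 - 1 / D)) *
      (I ^ (1 - 1 / D) / I ^ ((D - p) / (D * p)) * (D * D ^ (-1 / p) * κ ^ (1 / q)) * G ^ (1 / p)) =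
      J * ((D ^ (-1 / p) * J ^ (-1 / D) * κ ^ (1 / q) * G ^ (1 / p)) / I ^ ((D - p) / (D * p))) := by
    field_simp
  rw [h2] at h
  have h3 := le_of_mul_le_mul_left ((mul_one J).trans_le h) hJ
  rwa [one_le_div p2] at h3

lemma bliss_inequality {V : ℝ → ℝ} {L : ℝ≥0} {a p q D M : ℝ} (hpq : p.HolderConjugate q)
    (hD : 1 < D) (hpD : p < D)
    (hVL : LipschitzWith L V) (h0 : ∀ r, 0 ≤ V r) (hM : ∀ r, V r ≤ M)
    (ha : 0 < a) (hpos : ∀ r, r < a → 0 < V r) (hVa : V a = 0) :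
    (∫ r in Ioo 0 a, V r ^ (D * p / (D - p)) * r ^ (D - 1)) ^ ((D - p) / (D * p)) ≤
      D ^ (-1 / p) * (Gamma (D / q) * Gamma (D / p) / (q * Gamma D)) ^ (-1 / D) *
        ((p - 1) / (D - p)) ^ (1 / q) *
        (∫ r in Ioo 0 a, |deriv V r| ^ p * r ^ (D - 1)) ^ (1 / p) := by
  have hp := hpq.pos
  have hq := hpq.symm.pos
  have hp1 := hpq.lt
  have hD0 : 0 < D := by linarith
  have hDp : 0 < D - p := by linarith
  have hqe : q = p / (p - 1) := hpq.conjugate_eq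
  have hp1' : 0 < p - 1 := by linarith
  set P := D * p / (D - p) with hP
  have hP0 : 0 < P := by positivity
  set θ := p * (D - 1) / (D - p) with hθ
  have hθ1 : 1 ≤ θ := by
    rw [hθ, one_le_div hDp]
    nlinarith
  have hPθ : P * (1 - 1 / D) = θ := by
    rw [hP, hθ]
    field_simp
  have hθq : (θ - 1) * q = P := by
    rw [hP, hθ, hqe]
    field_simp
    ring
  have eDq : D / q = D - D / p := by
    rw [hqe]
    field_simp
  have hDp1 : 1 < D / p := (one_lt_div hp).2 hpD
  set J := Gamma (D / q) * Gamma (D / p) / (q * Gamma D) with hJ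
  have g1 : 0 < Gamma (D / q) := Gamma_pos_of_pos (by positivity)
  have g2 : 0 < Gamma (D / p) := Gamma_pos_of_pos (by positivity)
  have g3 : 0 < Gamma D := Gamma_pos_of_pos hD0
  have hJ0 : 0 < J := by positivity
  set w := blissDensity D q with hw
  have hb0 : D / q < D := by rw [eDq]; linarith
  have hb1 : D / q < D - 1 := by rw [eDq]; linarith
  have eDq2 : (D + q) / q = D / q + 1 := by field_simp
  have hb2 : (D + q) / q < D := by rw [eDq2]; linarith
  have w0 : ∀ r ∈ Ioi (0 : ℝ), r ^ (D - 1) * (1 + r ^ q) ^ (-D) = w r := fun r hr => by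
    rw [hw, blissDensity, mul_comm]
  have w1 : ∀ r ∈ Ioi (0 : ℝ), r ^ (D - 1) * (1 + r ^ q) ^ (-(D - 1)) = (1 + r ^ q) * w r :=
      fun r hr => by
    have : (0 : ℝ) < r := hr
    have h1 : 0 < 1 + r ^ q := by positivity
    rw [hw, blissDensity, show -(D - 1) = 1 + -D by ring, rpow_add h1, rpow_one]
    ring
  have w2 : ∀ r ∈ Ioi (0 : ℝ), r ^ (D + q - 1) * (1 + r ^ q) ^ (-D) = r ^ q * w r := fun r hr => by
    rw [hw, blissDensity, show D + q - 1 = (D - 1) + q by ring, rpow_add hr]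
    ring
  have i0 := (integrableOn_rpow_mul_one_add_rpow hD0 hq hb0).congr_fun w0 measurableSet_Ioi
  have i1 := (integrableOn_rpow_mul_one_add_rpow hD0 hq hb1).congr_fun w1 measurableSet_Ioi
  have i2 := (integrableOn_rpow_mul_one_add_rpow (add_pos hD0 hq) hq hb2).congr_fun w2
    measurableSet_Ioi
  have v0 : ∫ r in Ioi 0, w r = J := by
    rw [← setIntegral_congr_fun measurableSet_Ioi w0, integral_rpow_mul_one_add_rpow hD0 hq hb0,
      hJ, eDq, sub_sub_cancel]
  have v1 : ∫ r in Ioi 0, (1 + r ^ q) * w r = θ * J := by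
    rw [← setIntegral_congr_fun measurableSet_Ioi w1, integral_rpow_mul_one_add_rpow hD0 hq hb1]
    have e1 : Gamma (D / p) = (D / p - 1) * Gamma (D / p - 1) := by
      rw [← Gamma_add_one (by linarith), sub_add_cancel]
    have e2 : Gamma D = (D - 1) * Gamma (D - 1) := by
      rw [← Gamma_add_one (by linarith), sub_add_cancel]
    have g4 : 0 < Gamma (D - 1) := Gamma_pos_of_pos (by linarith)
    have hd : D - 1 ≠ 0 := by linarith
    rw [hJ, e1, e2, hθ, show D - 1 - D / q = D / p - 1 by rw [eDq]; ring]
    field_simp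
  have v2 : ∫ r in Ioi 0, r ^ q * w r = J * (D * ((p - 1) / (D - p))) := by
    rw [← setIntegral_congr_fun measurableSet_Ioi w2,
      integral_rpow_mul_one_add_rpow (add_pos hD0 hq) hq hb2]
    have e1 : Gamma (D / p) = (D / p - 1) * Gamma (D / p - 1) := by
      rw [← Gamma_add_one (by linarith), sub_add_cancel]
    rw [hJ, eDq2, Gamma_add_one (by positivity), show D - (D / q + 1) = D / p - 1 by rw [eDq]; ring,
      e1]
    have : D / q = D * (p - 1) / p := by rw [hqe]; field_simp
    rw [this]
    field_simp
  have t0 := tendsto_setIntegral_Ioo_atTop i0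
  have t1 := tendsto_setIntegral_Ioo_atTop i1
  have t2 := tendsto_setIntegral_Ioo_atTop i2
  rw [v0] at t0
  rw [v1] at t1
  rw [v2] at t2
  set I := ∫ r in Ioo 0 a, V r ^ P * r ^ (D - 1) with hI
  set G := ∫ r in Ioo 0 a, |deriv V r| ^ p * r ^ (D - 1) with hG
  have hG0 : 0 ≤ G := setIntegral_nonneg measurableSet_Ioo fun r hr => by
    have := hr.1
    positivity
  have hcont : Continuous fun r => V r ^ P * r ^ (D - 1) :=
    (hVL.continuous.rpow_const fun _ => Or.inr hP0.le).mul
      (continuous_id.rpow_const fun _ => Or.inr (by linarith))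
  have hIint : I = ∫ r in (0 : ℝ)..a, V r ^ P * r ^ (D - 1) := by
    rw [intervalIntegral.integral_of_le ha.le, integral_Ioc_eq_integral_Ioo]
  have hI0 : 0 < I := by
    rw [hIint]
    refine intervalIntegral.intervalIntegral_pos_of_pos_on (hcont.intervalIntegrable _ _)
      (fun r hr => ?_) ha
    have := hpos r hr.2
    have := hr.1
    positivity
  refine rpow_le_of_bliss_limit hpq hD0 (by positivity) hJ0 hI0 ?_
  have hθ0 : 0 < θ := by linarith
  have hlim : θ * J ≤ 1 / D * (J / I) ^ (1 - 1 / D) *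
      (θ * ((J * (D * ((p - 1) / (D - p))) / (J / I)) ^ (1 / q) * G ^ (1 / p))) := by
    have hcI : J / I ≠ 0 := (div_pos hJ0 hI0).ne'
    have tc := t0.div_const I
    have hr := ((tc.rpow_const (p := 1 - 1 / D) (Or.inl hcI)).const_mul (1 / D)).mul
      (((((t2.div tc hcI).rpow_const (p := 1 / q) (Or.inr (by positivity))).mul_const
        (G ^ (1 / p))).const_mul θ))
    refine le_of_tendsto_of_tendsto t1 hr ?_
    filter_upwards [eventually_gt_atTop 0] with N hN
    have hJN : 0 < ∫ r in Ioo 0 N, w r := by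
      rw [← integral_Ioc_eq_integral_Ioo, ← intervalIntegral.integral_of_le hN.le]
      refine intervalIntegral.intervalIntegral_pos_of_pos_on ?_
        (fun r hr => blissDensity_pos hr.1) hN
      refine ContinuousOn.intervalIntegrable ?_
      rw [uIcc_of_le hN.le]
      exact (continuousOn_blissDensity hD.le hq.le).mono Icc_subset_Ici_self
    refine bliss_truncated hpq hD hθ1 hPθ hθq hVL h0 hM ha hpos hVa (div_pos hJN hI0) hN ?_
    simp_rw [mul_assoc]
    rw [intervalIntegral.integral_const_mul, ← hIint, div_mul_cancel₀ _ hI0.ne',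
      intervalIntegral.integral_of_le hN.le, integral_Ioc_eq_integral_Ioo]
  refine le_of_mul_le_mul_left (hlim.trans_eq ?_) hθ0
  ring

end BlissInequality

section UnitBall

open Set
open scoped ENNReal NNReal Topology

variable {n : ℕ} {A : Fin n → ℝ}

lemma integral_coneMeasure (hA : ∀ i, 0 ≤ A i) (f : EuclideanSpace ℝ (Fin n) → ℝ) :
    ∫ x, f x ∂coneMeasure A = ∫ x in monSet A, monWeight A x * f x := by
  have := (continuous_monWeight hA).measurable
  rw [coneMeasure, integral_withDensity_eq_integral_toReal_smul (by fun_prop) (by simp)]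
  refine integral_congr_ae (Eventually.of_forall fun x => ?_)
  simp only [smul_eq_mul, ENNReal.toReal_ofReal (monWeight_nonneg A x)]

lemma lt_exp_neg_sq_iff {s r : ℝ} (hs : 0 < s) (hr : 0 ≤ r) :
    s < exp (-r ^ (2 : ℝ)) ↔ r < √(-log s) := by
  rw [← log_lt_iff_lt_exp hs, rpow_two, lt_sqrt hr, lt_neg]

lemma integral_exp_neg_norm_sq_coneMeasure (hA : ∀ i, 0 ≤ A i) (hD : 0 < monDim A) :
    ∫ x, exp (-‖x‖ ^ (2 : ℝ)) ∂coneMeasure A =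
      coneBeta A * ∫ r, exp (-r ^ (2 : ℝ)) ∂radialMeasure (monDim A) := by
  have hm1 : Measurable fun x : EuclideanSpace ℝ (Fin n) => exp (-‖x‖ ^ (2 : ℝ)) := by fun_prop
  have hm2 : Measurable fun r : ℝ => exp (-r ^ (2 : ℝ)) := by fun_prop
  have h : ∫⁻ x, ENNReal.ofReal (exp (-‖x‖ ^ (2 : ℝ))) ∂coneMeasure A =
      ENNReal.ofReal (coneBeta A) *
        ∫⁻ r, ENNReal.ofReal (exp (-r ^ (2 : ℝ))) ∂radialMeasure (monDim A) := by
    rw [lintegral_eq_lintegral_ofReal_lt (coneMeasure A) hm1.ennreal_ofReal,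
      lintegral_eq_lintegral_ofReal_lt (radialMeasure _) hm2.ennreal_ofReal,
      ← lintegral_const_mul' _ _ ENNReal.ofReal_ne_top]
    refine setLIntegral_congr_fun measurableSet_Ioi fun s hs => ?_
    have hs0 : (0 : ℝ) < s := hs
    simp only [ENNReal.ofReal_lt_ofReal_iff (exp_pos _)]
    rcases lt_or_ge s 1 with hs1 | hs1
    · have hl : 0 < √(-log s) := sqrt_pos.2 (neg_pos.2 (log_neg hs0 hs1))
      have e1 : {x : EuclideanSpace ℝ (Fin n) | s < exp (-‖x‖ ^ (2 : ℝ))} =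
          Metric.ball 0 (√(-log s)) := by
        ext x
        rw [mem_ofPred_eq, lt_exp_neg_sq_iff hs0 (norm_nonneg x), mem_ball_zero_iff]
      have e2 : radialMeasure (monDim A) {r : ℝ | s < exp (-r ^ (2 : ℝ))} =
          radialMeasure (monDim A) (Iio (√(-log s))) := by
        refine measure_congr ?_
        filter_upwards [ae_radialMeasure_pos (monDim A)] with r hr
        exact propext (lt_exp_neg_sq_iff hs0 hr.le)
      rw [e1, e2, coneMeasure_ball hl, radialMeasure_Iio hD hl.le, mul_comm, coneBeta,
        ofReal_measureReal (coneMeasure_lt_top hA Metric.isBounded_ball).ne]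
    · have hle : ∀ r : ℝ, 0 ≤ r → ¬ s < exp (-r ^ (2 : ℝ)) := fun r hr => by
        refine not_lt.2 (le_trans ?_ hs1)
        rw [exp_le_one_iff]
        linarith [rpow_nonneg hr 2]
      have e1 : {x : EuclideanSpace ℝ (Fin n) | s < exp (-‖x‖ ^ (2 : ℝ))} = ∅ :=
        eq_empty_of_forall_notMem fun x hx => hle _ (norm_nonneg x) hx
      have e2 : radialMeasure (monDim A) {r : ℝ | s < exp (-r ^ (2 : ℝ))} = 0 := by
        refine (measure_eq_zero_iff_ae_notMem).2 ?_
        filter_upwards [ae_radialMeasure_pos (monDim A)] with r hr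
        exact hle r hr.le
      rw [e1, e2, measure_empty, mul_zero]
  rw [integral_eq_lintegral_of_nonneg_ae (Eventually.of_forall fun _ => (exp_pos _).le)
      hm1.aestronglyMeasurable, integral_eq_lintegral_of_nonneg_ae
      (Eventually.of_forall fun _ => (exp_pos _).le) hm2.aestronglyMeasurable, h, ENNReal.toReal_mul,
    ENNReal.toReal_ofReal (coneBeta_pos hA).le]

lemma integral_exp_neg_sq_radialMeasure {D : ℝ} (hD : 0 < D) :
    ∫ r, exp (-r ^ (2 : ℝ)) ∂radialMeasure D = Gamma (1 + D / 2) := by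
  rw [integral_radialMeasure hD]
  simp_rw [mul_assoc]
  rw [integral_const_mul, integral_rpow_mul_exp_neg_rpow two_pos (by linarith), add_comm 1,
    Gamma_add_one (by positivity), sub_add_cancel]
  ring

lemma integral_monWeight_exp_neg_norm_sq (hA : ∀ i, 0 ≤ A i) :
    ∫ x in monSet A, monWeight A x * exp (-‖x‖ ^ (2 : ℝ)) =
      (∏ i, Gamma ((A i + 1) / 2)) / 2 ^ monK A := by
  classical
  set f : Fin n → ℝ → ℝ := fun i t => if 0 < A i then
    (Ioi (0 : ℝ)).indicator (fun t => t ^ A i * exp (-t ^ (2 : ℝ))) t else exp (-1 * t ^ 2) with hf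
  have h1 : ∀ x : EuclideanSpace ℝ (Fin n), (monSet A).indicator
      (fun x => monWeight A x * exp (-‖x‖ ^ (2 : ℝ))) x = ∏ i, f i (x i) := by
    intro x
    by_cases hx : x ∈ monSet A
    · rw [indicator_of_mem hx, monWeight, rpow_two, EuclideanSpace.real_norm_sq_eq,
        ← Finset.sum_neg_distrib, exp_sum, ← Finset.prod_mul_distrib]
      refine Finset.prod_congr rfl fun i _ => ?_
      by_cases hi : 0 < A i
      · have hxi : 0 < x i := hx i hi
        simp only [hf, if_pos hi]
        rw [indicator_of_mem (mem_Ioi.2 hxi), abs_of_pos hxi, rpow_two]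
      · have hi0 : A i = 0 := le_antisymm (not_lt.1 hi) (hA i)
        simp only [hf, hi0, lt_irrefl, if_false, rpow_zero]
        ring_nf
    · rw [indicator_of_notMem hx]
      have : ∃ i, 0 < A i ∧ ¬ 0 < x i := by
        by_contra! h
        exact hx fun i hi => h i hi
      obtain ⟨i, hi, hxi⟩ := this
      refine (Finset.prod_eq_zero (Finset.mem_univ i) ?_).symm
      simp only [hf, if_pos hi]
      exact indicator_of_notMem hxi _
  have h2 : ∀ i, ∫ t, f i t = Gamma ((A i + 1) / 2) / if 0 < A i then 2 else 1 := by
    intro i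
    by_cases hi : 0 < A i
    · simp only [hf, if_pos hi]
      rw [integral_indicator measurableSet_Ioi,
        integral_rpow_mul_exp_neg_rpow two_pos (by linarith)]
      ring
    · have hi0 : A i = 0 := le_antisymm (not_lt.1 hi) (hA i)
      simp only [hf, hi0, lt_irrefl, if_false]
      rw [integral_gaussian, zero_add, Gamma_one_half_eq, div_one, div_one]
  rw [← integral_indicator (isOpen_monSet A).measurableSet]
  simp_rw [h1]
  have h3 := (PiLp.volume_preserving_ofLp (Fin n)).integral_comp
    (MeasurableEquiv.toLp 2 (Fin n → ℝ)).symm.measurableEmbedding (fun y : Fin n → ℝ => ∏ i, f i (y i))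
  refine (h3.trans (integral_fintype_prod_volume_eq_prod f)).trans ?_
  simp_rw [h2]
  rw [Finset.prod_div_distrib, Finset.prod_ite, Finset.prod_const, Finset.prod_const_one, mul_one,
    monK, Nat.card_eq_fintype_card, Fintype.card_subtype]

lemma coneBeta_eq (hA : ∀ i, 0 ≤ A i) (hD : 0 < monDim A) :
    coneBeta A = (∏ i, Gamma ((A i + 1) / 2)) / (2 ^ monK A * Gamma (1 + monDim A / 2)) := by
  have h1 := integral_exp_neg_norm_sq_coneMeasure hA hD
  rw [integral_coneMeasure hA, integral_monWeight_exp_neg_norm_sq hA,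
    integral_exp_neg_sq_radialMeasure hD] at h1
  have := Gamma_pos_of_pos (show 0 < 1 + monDim A / 2 by positivity)
  rw [← div_div, h1, mul_div_cancel_right₀ _ this.ne']

lemma monC1_eq (hA : ∀ i, 0 ≤ A i) (hD : 0 < monDim A) :
    monC1 A = (monDim A)⁻¹ * coneBeta A ^ (-1 / monDim A) := by
  have h1 : 0 < ∏ i, Gamma ((A i + 1) / 2) :=
    Finset.prod_pos fun i _ => Gamma_pos_of_pos (by have := hA i; positivity)
  have := Gamma_pos_of_pos (show 0 < 1 + monDim A / 2 by positivity)
  rw [coneBeta_eq hA hD, monC1, neg_div, rpow_neg (by positivity), ← inv_rpow (by positivity),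
    inv_div]

end UnitBall

section ConeSobolev

open Set
open scoped ENNReal NNReal Topology

variable {n : ℕ} {A : Fin n → ℝ}

lemma monCp_eq (hA : ∀ i, 0 ≤ A i) (hD : 0 < monDim A) {p q : ℝ} (hpq : p.HolderConjugate q) :
    monCp A p = (monDim A * coneBeta A) ^ (-1 / monDim A) * (monDim A ^ (-1 / p) *
      (Gamma (monDim A / q) * Gamma (monDim A / p) / (q * Gamma (monDim A))) ^ (-1 / monDim A) *
        ((p - 1) / (monDim A - p)) ^ (1 / q)) := by
  have hp := hpq.pos
  have hq := hpq.symm.pos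
  have hβ := coneBeta_pos hA
  have g1 := Gamma_pos_of_pos (div_pos hD hq)
  have g2 := Gamma_pos_of_pos (div_pos hD hp)
  have g3 := Gamma_pos_of_pos hD
  rw [monCp, if_neg hpq.lt.ne', ← hpq.conjugate_eq, monC1_eq hA hD, mul_rpow hD.le hβ.le]
  set D := monDim A
  have e1 : D⁻¹ * D ^ (1 - 1 / p - 1 / D) = D ^ (-1 / D) * D ^ (-1 / p) := by
    rw [← rpow_neg_one, ← rpow_add hD, ← rpow_add hD]
    congr 1
    ring
  have e2 : (q * Gamma D / (Gamma (D / p) * Gamma (D / q))) ^ (1 / D) =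
      (Gamma (D / q) * Gamma (D / p) / (q * Gamma D)) ^ (-1 / D) := by
    rw [neg_div, rpow_neg (by positivity), ← inv_rpow (by positivity), inv_div,
      mul_comm (Gamma (D / q))]
  rw [e2]
  calc _ = coneBeta A ^ (-1 / D) * (D⁻¹ * D ^ (1 - 1 / p - 1 / D)) * ((p - 1) / (D - p)) ^ (1 / q) *
        (Gamma (D / q) * Gamma (D / p) / (q * Gamma D)) ^ (-1 / D) := by ring
    _ = _ := by rw [e1]; ring

lemma monCp_pos (hA : ∀ i, 0 ≤ A i) {p : ℝ} (hp1 : 1 < p) (hpD : p < monDim A) :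
    0 < monCp A p := by
  have hD : 0 < monDim A := by linarith
  have hpq := Real.HolderConjugate.conjExponent hp1
  have hp := hpq.pos
  have hq := hpq.symm.pos
  have hβ := coneBeta_pos hA
  rw [monCp_eq hA hD hpq]
  have g1 := Gamma_pos_of_pos (div_pos hD hq)
  have g2 := Gamma_pos_of_pos (div_pos hD hp)
  have g3 := Gamma_pos_of_pos hD
  have h1 : 0 < p - 1 := by linarith
  have h2 : 0 < monDim A - p := by linarith
  positivity

lemma integral_rpow_coneRearrangement (hA : ∀ i, 0 ≤ A i) (hD : 0 < monDim A)
    {v : EuclideanSpace ℝ (Fin n) → ℝ} (hv : Continuous v) (hv0 : ∀ x, 0 ≤ v x)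
    (hs : HasCompactSupport v) {a : ℝ} (ha : 0 < a) :
    ∫ x, v x ^ a ∂coneMeasure A =
      coneBeta A * ∫ r, coneRearrangement A v r ^ a ∂radialMeasure (monDim A) := by
  have hm : Measurable (coneRearrangement A v) := (antitone_coneRearrangement hA hD hv hs).measurable
  rw [integral_eq_lintegral_of_nonneg_ae (Eventually.of_forall fun x => rpow_nonneg (hv0 x) _)
      (hv.measurable.pow_const a).aestronglyMeasurable, integral_eq_lintegral_of_nonneg_ae
      (Eventually.of_forall fun r => rpow_nonneg (coneRearrangement_nonneg r) _)
      (hm.pow_const a).aestronglyMeasurable,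
    lintegral_rpow_coneRearrangement hA hD hv hv0 hs ha, ENNReal.toReal_mul,
    ENNReal.toReal_ofReal (coneBeta_pos hA).le]

lemma integral_radialMeasure_eq_setIntegral {D a : ℝ} (hD : 0 < D) {f : ℝ → ℝ}
    (hf : ∀ r, a < r → f r = 0) :
    ∫ r, f r ∂radialMeasure D = D * ∫ r in Ioo 0 a, f r * r ^ (D - 1) := by
  rw [integral_radialMeasure hD, ← integral_const_mul, ← integral_Ioc_eq_integral_Ioo]
  have h := setIntegral_eq_of_subset_of_forall_sdiff_eq_zero (μ := volume)
    (f := fun r => D * r ^ (D - 1) * f r) (measurableSet_Ioi (a := (0 : ℝ)))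
    (Ioc_subset_Ioi_self : Ioc 0 a ⊆ Ioi 0) fun r hr => by
      have hr2 : a < r := by
        by_contra! h
        exact hr.2 ⟨hr.1, h⟩
      rw [hf r hr2, mul_zero]
  rw [h]
  refine integral_congr_ae (Eventually.of_forall fun r => ?_)
  simp only
  ring

/-- The sharp Sobolev inequality on the cone, for `1 < p`. -/
lemma cone_sobolev (hA : ∀ i, 0 ≤ A i) {p : ℝ} (hp1 : 1 < p) (hpD : p < monDim A)
    {u : EuclideanSpace ℝ (Fin n) → ℝ} (hu : ContDiff ℝ 1 u) (hs : HasCompactSupport u) :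
    (∫ x, |u x| ^ (monDim A * p / (monDim A - p)) ∂coneMeasure A) ^
        ((monDim A - p) / (monDim A * p)) ≤
      monCp A p * (∫ x, ‖fderiv ℝ u x‖ ^ p ∂coneMeasure A) ^ (1 / p) := by
  have hD : 0 < monDim A := by linarith
  have hpq := Real.HolderConjugate.conjExponent hp1
  set q := p.conjExponent
  have hp := hpq.pos
  have hβ := coneBeta_pos hA
  have hDp : 0 < monDim A - p := by linarith
  have hCp := monCp_pos hA hp1 hpD
  have hE0 : 0 ≤ ∫ x, ‖fderiv ℝ u x‖ ^ p ∂coneMeasure A :=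
    integral_nonneg fun x => by positivity
  obtain ⟨L, hL⟩ := exists_lipschitzWith_abs hu hs
  have hsv : HasCompactSupport fun x => |u x| := hs.norm
  have hPS := integral_deriv_coneRearrangement_le hA hD hpq hu hs
  set v : EuclideanSpace ℝ (Fin n) → ℝ := fun x => |u x| with hv
  set V := coneRearrangement A v with hV
  have hVL : LipschitzWith L V := lipschitzWith_coneRearrangement hA hD hL hsv
  have hanti : Antitone V := antitone_coneRearrangement hA hD hL.continuous hsv
  have hP : 0 < monDim A * p / (monDim A - p) := by positivity
  have hint := integral_rpow_coneRearrangement hA hD hL.continuous (fun x => abs_nonneg (u x)) hsv hP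
  change ∫ x, |u x| ^ _ ∂coneMeasure A = _ at hint
  rw [hint]
  set a := coneRadius A {x | 0 < v x} with ha
  have ha0 : 0 ≤ a := coneRadius_nonneg _
  have hVz : ∀ r, a ≤ r → V r = 0 := fun r hr =>
    coneRearrangement_eq_zero hA hD hL.continuous hsv hr
  rw [integral_radialMeasure_eq_setIntegral (a := a) hD fun r hr => by
    rw [← hV, hVz r hr.le, zero_rpow hP.ne']]
  rw [integral_radialMeasure_eq_setIntegral (a := a) hD fun r hr => by
    rw [deriv_eq_zero_of_forall_gt hVz hr, abs_zero, zero_rpow hp.ne']] at hPS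
  rcases ha0.eq_or_lt with ha1 | ha1
  · rw [← ha1, Ioo_self, setIntegral_empty, mul_zero, mul_zero, zero_rpow (by positivity)]
    positivity
  have hB := bliss_inequality (M := V 0) hpq (by linarith) hpD hVL
    (fun r => coneRearrangement_nonneg r) (fun r => ?_) ha1 (fun r hr => ?_) (hVz a le_rfl)
  · set G := ∫ r in Ioo 0 a, |deriv V r| ^ p * r ^ (monDim A - 1)
    set I := ∫ r in Ioo 0 a, V r ^ (monDim A * p / (monDim A - p)) * r ^ (monDim A - 1)
    have hG0 : 0 ≤ G := setIntegral_nonneg measurableSet_Ioo fun r hr => by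
      have := hr.1
      positivity
    have hI0 : 0 ≤ I := setIntegral_nonneg measurableSet_Ioo fun r hr =>
      mul_nonneg (rpow_nonneg (coneRearrangement_nonneg r) _) (rpow_nonneg hr.1.le _)
    have hDβ : 0 < monDim A * coneBeta A := by positivity
    have e1 : (monDim A * coneBeta A) ^ ((monDim A - p) / (monDim A * p)) =
        (monDim A * coneBeta A) ^ (-1 / monDim A) * (monDim A * coneBeta A) ^ (1 / p) := by
      rw [← rpow_add hDβ]
      congr 1
      field_simp
      ring
    have hG : (monDim A * coneBeta A) ^ (1 / p) * G ^ (1 / p) ≤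
        (∫ x, ‖fderiv ℝ u x‖ ^ p ∂coneMeasure A) ^ (1 / p) := by
      rw [← mul_rpow hDβ.le hG0]
      refine rpow_le_rpow (by positivity) (le_trans (le_of_eq (by ring)) hPS) (by positivity)
    calc (coneBeta A * (monDim A * I)) ^ ((monDim A - p) / (monDim A * p))
        = (monDim A * coneBeta A) ^ ((monDim A - p) / (monDim A * p)) *
            I ^ ((monDim A - p) / (monDim A * p)) := by
          rw [← mul_rpow hDβ.le hI0]
          congr 1
          ring
      _ ≤ _ := mul_le_mul_of_nonneg_left hB (by positivity)
      _ = monCp A p * ((monDim A * coneBeta A) ^ (1 / p) * G ^ (1 / p)) := by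
          rw [e1, monCp_eq hA hD hpq]
          ring
      _ ≤ _ := mul_le_mul_of_nonneg_left hG hCp.le
  · rcases le_total 0 r with hr | hr
    · exact hanti hr
    · refine le_of_eq ?_
      simp [hV, coneRearrangement, max_eq_right hr]
  · rw [hV, lt_coneRearrangement_iff hA hD hL.continuous hsv le_rfl]
    exact max_lt hr ha1

end ConeSobolev

section Reflections

open Set
open scoped ENNReal NNReal Topology

variable {n : ℕ} {A : Fin n → ℝ}

/-- The reflection changing the sign of the coordinates marked by `ε`. -/
def signFlip (ε : Fin n → Bool) : EuclideanSpace ℝ (Fin n) ≃ₗᵢ[ℝ] EuclideanSpace ℝ (Fin n) :=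
  LinearIsometryEquiv.piLpCongrRight 2 fun i =>
    if ε i then LinearIsometryEquiv.neg ℝ else LinearIsometryEquiv.refl ℝ ℝ

lemma signFlip_apply (ε : Fin n → Bool) (x : EuclideanSpace ℝ (Fin n)) (i : Fin n) :
    signFlip ε x i = if ε i then -x i else x i := by
  simp only [signFlip, LinearIsometryEquiv.piLpCongrRight_apply]
  split_ifs <;> simp

lemma signFlip_signFlip (ε : Fin n → Bool) (x : EuclideanSpace ℝ (Fin n)) :
    signFlip ε (signFlip ε x) = x := by
  ext i
  rw [signFlip_apply, signFlip_apply]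
  split_ifs <;> simp

lemma monWeight_signFlip (ε : Fin n → Bool) (x : EuclideanSpace ℝ (Fin n)) :
    monWeight A (signFlip ε x) = monWeight A x := by
  refine Finset.prod_congr rfl fun i _ => ?_
  rw [signFlip_apply]
  split_ifs <;> simp

lemma norm_fderiv_comp_signFlip {u : EuclideanSpace ℝ (Fin n) → ℝ} (hu : ContDiff ℝ 1 u)
    (ε : Fin n → Bool) (x : EuclideanSpace ℝ (Fin n)) :
    ‖fderiv ℝ (u ∘ signFlip ε) x‖ = ‖fderiv ℝ u (signFlip ε x)‖ := by
  rw [fderiv_comp x (hu.differentiable one_ne_zero _) (signFlip ε).differentiable.differentiableAt,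
    LinearIsometryEquiv.fderiv]
  exact ContinuousLinearMap.opNorm_comp_linearIsometryEquiv _ _

lemma setIntegral_comp_signFlip (ε : Fin n → Bool) (F : EuclideanSpace ℝ (Fin n) → ℝ) :
    ∫ x in monSet A, F (signFlip ε x) = ∫ x in signFlip ε ⁻¹' monSet A, F x := by
  have hm := (isOpen_monSet A).measurableSet
  have hm' : MeasurableSet (signFlip ε ⁻¹' monSet A) := (signFlip ε).continuous.measurable hm
  rw [← integral_indicator hm, ← integral_indicator hm',
    ← (signFlip ε).measurePreserving.integral_comp
      (signFlip ε).toHomeomorph.measurableEmbedding]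
  refine integral_congr_ae (Eventually.of_forall fun x => ?_)
  simp only [indicator, signFlip_signFlip]
  rfl

lemma sum_indicator_signFlip {x : EuclideanSpace ℝ (Fin n)} (hx : ∀ i, x i ≠ 0) (F : ℝ) :
    ∑ ε : Fin n → Bool, (signFlip ε ⁻¹' monSet A).indicator (fun _ => F) x =
      (∏ i, if 0 < A i then (1 : ℝ) else 2) * F := by
  classical
  set g : Fin n → Bool → ℝ := fun i b =>
    if 0 < A i then (if 0 < (if b then -x i else x i) then 1 else 0) else 1 with hg
  have h1 : ∀ ε : Fin n → Bool, (signFlip ε ⁻¹' monSet A).indicator (fun _ => F) x =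
      (∏ i, g i (ε i)) * F := by
    intro ε
    by_cases h : signFlip ε x ∈ monSet A
    · rw [indicator_of_mem (mem_preimage.2 h), Finset.prod_eq_one, one_mul]
      intro i _
      by_cases hi : 0 < A i
      · have := h i hi
        rw [signFlip_apply] at this
        simp only [hg, if_pos hi, if_pos this]
      · simp only [hg, if_neg hi]
    · rw [indicator_of_notMem (by simpa using h)]
      have : ∃ i, 0 < A i ∧ ¬ 0 < signFlip ε x i := by
        by_contra! h2
        exact h fun i hi => h2 i hi
      obtain ⟨i, hi, hxi⟩ := this
      rw [signFlip_apply] at hxi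
      rw [Finset.prod_eq_zero (Finset.mem_univ i), zero_mul]
      simp only [hg, if_pos hi, if_neg hxi]
  have h2 : ∀ i, ∑ b, g i b = if 0 < A i then (1 : ℝ) else 2 := by
    intro i
    simp only [hg, Fintype.sum_bool]
    by_cases hi : 0 < A i
    · simp only [if_pos hi]
      rcases (hx i).lt_or_gt with h | h
      · simp [h, h.le]
      · simp [h, h.le]
    · simp only [if_neg hi]
      norm_num
  simp_rw [h1, ← h2]
  rw [← Finset.sum_mul, Finset.prod_univ_sum, Fintype.piFinset_univ]

lemma ae_forall_coord_ne_zero : ∀ᵐ x : EuclideanSpace ℝ (Fin n), ∀ i, x i ≠ 0 := by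
  rw [ae_all_iff]
  intro i
  have h : volume {y : Fin n → ℝ | y i = 0} = 0 :=
    Measure.pi_hyperplane (fun _ => (volume : Measure ℝ)) i 0
  have h2 := (PiLp.volume_preserving_ofLp (Fin n)).measure_preimage
    (s := {y : Fin n → ℝ | y i = 0})
    (measurableSet_eq_fun (measurable_pi_apply i) measurable_const).nullMeasurableSet
  rw [h] at h2
  rw [ae_iff]
  simpa using h2

lemma sum_setIntegral_signFlip {F : EuclideanSpace ℝ (Fin n) → ℝ} (hF : Integrable F) :
    ∑ ε : Fin n → Bool, ∫ x in monSet A, F (signFlip ε x) =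
      (∏ i, if 0 < A i then (1 : ℝ) else 2) * ∫ x, F x := by
  have hm' : ∀ ε : Fin n → Bool, MeasurableSet (signFlip ε ⁻¹' monSet A) := fun ε =>
    (signFlip ε).continuous.measurable (isOpen_monSet A).measurableSet
  simp_rw [setIntegral_comp_signFlip]
  simp_rw [← integral_indicator (hm' _)]
  rw [← integral_finsetSum _ fun ε _ => hF.indicator (hm' ε), ← integral_const_mul]
  refine integral_congr_ae ?_
  filter_upwards [ae_forall_coord_ne_zero] with x hx
  rw [← sum_indicator_signFlip hx]
  rfl

lemma integrable_monWeight_mul (hA : ∀ i, 0 ≤ A i) {f : EuclideanSpace ℝ (Fin n) → ℝ}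
    (hf : Continuous f) (hs : HasCompactSupport f) : Integrable fun x => monWeight A x * f x :=
  ((continuous_monWeight hA).mul hf).integrable_of_hasCompactSupport hs.mul_left

lemma continuous_rpow_abs_and_hasCompactSupport {u : EuclideanSpace ℝ (Fin n) → ℝ}
    (hu : Continuous u) (hs : HasCompactSupport u) {P : ℝ} (hP : 0 < P) :
    (Continuous fun x => |u x| ^ P) ∧ HasCompactSupport fun x => |u x| ^ P :=
  ⟨hu.abs.rpow_const fun _ => Or.inr hP.le,
    hs.comp_left (g := fun t => |t| ^ P) (by rw [abs_zero, zero_rpow hP.ne'])⟩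

lemma continuous_rpow_fderiv_and_hasCompactSupport {u : EuclideanSpace ℝ (Fin n) → ℝ}
    (hu : ContDiff ℝ 1 u) (hs : HasCompactSupport u) {p : ℝ} (hp : 0 < p) :
    (Continuous fun x => ‖fderiv ℝ u x‖ ^ p) ∧ HasCompactSupport fun x => ‖fderiv ℝ u x‖ ^ p :=
  ⟨(hu.continuous_fderiv one_ne_zero).norm.rpow_const fun _ => Or.inr hp.le,
    (hs.fderiv ℝ).comp_left (g := fun t => ‖t‖ ^ p) (by rw [norm_zero, zero_rpow (ne_of_gt hp)])⟩

/-- The sharp Sobolev inequality on the whole space, for `1 < p`. -/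
lemma whole_space_sobolev (hA : ∀ i, 0 ≤ A i) {p : ℝ} (hp1 : 1 < p) (hpD : p < monDim A)
    {u : EuclideanSpace ℝ (Fin n) → ℝ} (hu : ContDiff ℝ 1 u) (hs : HasCompactSupport u) :
    (∫ x, monWeight A x * |u x| ^ (monDim A * p / (monDim A - p))) ^
        ((monDim A - p) / (monDim A * p)) ≤
      monCp A p * (∫ x, monWeight A x * ‖fderiv ℝ u x‖ ^ p) ^ (1 / p) := by
  have hp : 0 < p := by linarith
  have hD : 0 < monDim A := by linarith
  have hDp : 0 < monDim A - p := by linarith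
  set P := monDim A * p / (monDim A - p) with hP
  have hP0 : 0 < P := by positivity
  have hPi : (monDim A - p) / (monDim A * p) = P⁻¹ := by rw [hP, inv_div]
  set K := monCp A p with hK
  have hK0 : 0 < K := monCp_pos hA hp1 hpD
  obtain ⟨c1, s1⟩ := continuous_rpow_abs_and_hasCompactSupport hu.continuous hs hP0
  obtain ⟨c2, s2⟩ := continuous_rpow_fderiv_and_hasCompactSupport hu hs hp
  have i1 := integrable_monWeight_mul hA c1 s1
  have i2 := integrable_monWeight_mul hA c2 s2
  have hX := sum_setIntegral_signFlip (A := A) i1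
  have hY := sum_setIntegral_signFlip (A := A) i2
  set X := ∫ x, monWeight A x * |u x| ^ P with hXd
  set Y := ∫ x, monWeight A x * ‖fderiv ℝ u x‖ ^ p with hYd
  have n2 : ∀ x, 0 ≤ monWeight A x * ‖fderiv ℝ u x‖ ^ p := fun x =>
    mul_nonneg (monWeight_nonneg A x) (by positivity)
  have hX0 : 0 ≤ X := integral_nonneg fun x => mul_nonneg (monWeight_nonneg A x) (by positivity)
  have hY0 : 0 ≤ Y := integral_nonneg n2
  have hexp : P / p = 1 + p / (monDim A - p) := by
    rw [hP]
    field_simp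
    ring
  have hcone : ∀ ε : Fin n → Bool,
      ∫ x in monSet A, monWeight A (signFlip ε x) * |u (signFlip ε x)| ^ P ≤
      K ^ P * Y ^ (p / (monDim A - p)) *
        ∫ x in monSet A, monWeight A (signFlip ε x) * ‖fderiv ℝ u (signFlip ε x)‖ ^ p := by
    intro ε
    have hb : ∫ x in monSet A, monWeight A (signFlip ε x) * ‖fderiv ℝ u (signFlip ε x)‖ ^ p ≤ Y := by
      rw [setIntegral_comp_signFlip ε fun x => monWeight A x * ‖fderiv ℝ u x‖ ^ p]
      exact setIntegral_le_integral i2 (Eventually.of_forall n2)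
    have hb0 : 0 ≤ ∫ x in monSet A,
        monWeight A (signFlip ε x) * ‖fderiv ℝ u (signFlip ε x)‖ ^ p :=
      integral_nonneg fun x => n2 _
    have hc := cone_sobolev hA hp1 hpD (u := u ∘ signFlip ε)
      (hu.comp (signFlip ε).contDiff)
      (hs.comp_homeomorph (signFlip ε).toHomeomorph)
    rw [integral_coneMeasure hA, integral_coneMeasure hA] at hc
    simp_rw [norm_fderiv_comp_signFlip hu, Function.comp_apply] at hc
    simp_rw [monWeight_signFlip] at hb hb0 ⊢
    set a := ∫ x in monSet A, monWeight A x * |u (signFlip ε x)| ^ P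
    set b := ∫ x in monSet A, monWeight A x * ‖fderiv ℝ u (signFlip ε x)‖ ^ p
    have ha0 : 0 ≤ a := integral_nonneg fun x =>
      mul_nonneg (monWeight_nonneg A x) (by positivity)
    rw [hPi] at hc
    calc a = (a ^ P⁻¹) ^ P := (rpow_inv_rpow ha0 hP0.ne').symm
      _ ≤ (K * b ^ (1 / p)) ^ P := rpow_le_rpow (by positivity) hc hP0.le
      _ = K ^ P * (b ^ (p / (monDim A - p)) * b) := by
        rw [mul_rpow hK0.le (by positivity), ← rpow_mul hb0, one_div_mul_eq_div, hexp,
          rpow_add_of_nonneg hb0 zero_le_one (by positivity), rpow_one, mul_comm b]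
      _ ≤ K ^ P * (Y ^ (p / (monDim A - p)) * b) := by gcongr
      _ = _ := by ring
  have hsum := Finset.sum_le_sum fun (ε : Fin n → Bool) (_ : ε ∈ Finset.univ) => hcone ε
  rw [← Finset.mul_sum, hX, hY] at hsum
  have hN : (0 : ℝ) < ∏ i, if 0 < A i then (1 : ℝ) else 2 :=
    Finset.prod_pos fun i _ => by split_ifs <;> norm_num
  have hXY : X ≤ K ^ P * (Y * Y ^ (p / (monDim A - p))) :=
    le_of_mul_le_mul_left (hsum.trans_eq (by ring)) hN
  have e2 : Y * Y ^ (p / (monDim A - p)) = (Y ^ (1 / p)) ^ P := by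
    rw [← rpow_mul hY0, one_div_mul_eq_div, hexp,
      rpow_add_of_nonneg hY0 zero_le_one (by positivity), rpow_one]
  rw [e2, ← mul_rpow hK0.le (by positivity)] at hXY
  rw [hPi]
  calc X ^ P⁻¹ ≤ ((K * Y ^ (1 / p)) ^ P) ^ P⁻¹ := rpow_le_rpow hX0 hXY (by positivity)
    _ = _ := rpow_rpow_inv (by positivity) hP0.ne'

end Reflections

section Endpoint

open Set
open scoped ENNReal NNReal Topology

variable {n : ℕ} {A : Fin n → ℝ}

lemma tendsto_integral_monWeight_mul_rpow (hA : ∀ i, 0 ≤ A i)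
    {h : EuclideanSpace ℝ (Fin n) → ℝ} (hc : Continuous h) (hs : HasCompactSupport h) {s : ℝ}
    (h0 : 0 < s) :
    Tendsto (fun t => ∫ x, monWeight A x * h x ^ t) (𝓝 s) (𝓝 (∫ x, monWeight A x * h x ^ s)) := by
  have hcont : ContinuousOn (fun t : ℝ => ∫ x, monWeight A x * h x ^ t) (Ioi 0) := by
    refine continuousOn_integral_of_compact_support hs ?_ fun t x ht hx => ?_
    · refine ContinuousOn.mul ((continuous_monWeight hA).comp continuous_snd).continuousOn ?_
      exact ((hc.comp continuous_snd).continuousOn).rpow continuous_fst.continuousOn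
        fun z hz => Or.inr hz.1
    · rw [image_eq_zero_of_notMem_tsupport hx, zero_rpow (ne_of_gt ht), mul_zero]
  exact hcont.continuousAt (Ioi_mem_nhds h0)

lemma tendsto_conjExponent_mul_Gamma {D : ℝ} (hD : 0 < D) :
    Tendsto (fun p : ℝ => p / (p - 1) * Gamma D / (Gamma (D / p) * Gamma (D / (p / (p - 1)))))
      (𝓝[>] 1) (𝓝 D) := by
  have hcont : ContinuousAt (fun p : ℝ => D * Gamma D / (Gamma (D / p) * Gamma (D * (p - 1) / p + 1)))
      1 := by
    have g : ∀ x : ℝ, 0 < x → ContinuousAt Gamma x := fun x hx =>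
      (differentiableAt_Gamma fun m => by
        have : (0 : ℝ) ≤ m := m.cast_nonneg
        linarith).continuousAt
    have c1 : ContinuousAt (fun p : ℝ => Gamma (D / p)) 1 :=
      ContinuousAt.comp (g := Gamma) (f := fun p => D / p) (g _ (by positivity))
        (continuousAt_const.div continuousAt_id one_ne_zero)
    have c2 : ContinuousAt (fun p : ℝ => Gamma (D * (p - 1) / p + 1)) 1 :=
      ContinuousAt.comp (g := Gamma) (f := fun p => D * (p - 1) / p + 1) (g _ (by norm_num))
        (((continuousAt_const.mul (continuousAt_id.sub continuousAt_const)).div continuousAt_id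
          one_ne_zero).add continuousAt_const)
    refine continuousAt_const.div (c1.mul c2) (mul_ne_zero ?_ ?_)
    · exact (Gamma_pos_of_pos (by positivity)).ne'
    · exact (Gamma_pos_of_pos (by norm_num)).ne'
  have hval : D * Gamma D / (Gamma (D / 1) * Gamma (D * (1 - 1) / 1 + 1)) = D := by
    have := Gamma_pos_of_pos hD
    simp only [div_one, sub_self, mul_zero, zero_add, Gamma_one, mul_one]
    field_simp
  have ht := hcont.tendsto
  rw [hval] at ht
  refine (ht.mono_left nhdsWithin_le_nhds).congr' ?_
  filter_upwards [self_mem_nhdsWithin] with p hp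
  have hp1 : (0 : ℝ) < p - 1 := sub_pos.2 hp
  have hp0 : (0 : ℝ) < p := by linarith
  have e : D / (p / (p - 1)) = D * (p - 1) / p := by field_simp
  have hpos : 0 < D * (p - 1) / p := by positivity
  have := Gamma_pos_of_pos hpos
  have := Gamma_pos_of_pos (div_pos hD hp0)
  rw [e, Gamma_add_one hpos.ne']
  field_simp

lemma exists_tendsto_monC1_ge_monCp (hD : 1 < monDim A) (hC : 0 ≤ monC1 A) :
    ∃ K : ℝ → ℝ, Tendsto K (𝓝[>] 1) (𝓝 (monC1 A)) ∧ ∀ᶠ p in 𝓝[>] 1, monCp A p ≤ K p := by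
  set D := monDim A with hDd
  have hD0 : 0 < D := by linarith
  refine ⟨fun p => monC1 A * D ^ (1 - 1 / p - 1 / D) *
    (p / (p - 1) * Gamma D / (Gamma (D / p) * Gamma (D / (p / (p - 1))))) ^ (1 / D), ?_, ?_⟩
  · have h1 : ContinuousAt (fun p : ℝ => monC1 A * D ^ (1 - 1 / p - 1 / D)) 1 := by
      refine continuousAt_const.mul (continuousAt_const.rpow ?_ (Or.inl hD0.ne'))
      exact (continuousAt_const.sub (continuousAt_const.div continuousAt_id one_ne_zero)).sub
        continuousAt_const
    have h2 := (tendsto_conjExponent_mul_Gamma hD0).rpow_const (p := 1 / D) (Or.inl hD0.ne')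
    have h3 := (h1.tendsto.mono_left (nhdsWithin_le_nhds (s := Ioi 1))).mul h2
    have hv : monC1 A * D ^ (1 - 1 / (1 : ℝ) - 1 / D) * D ^ (1 / D) = monC1 A := by
      rw [mul_assoc, ← rpow_add hD0]
      norm_num
    rwa [hv] at h3
  · have hlt : ∀ᶠ p in 𝓝[>] (1 : ℝ), p < (1 + D) / 2 :=
      nhdsWithin_le_nhds (gt_mem_nhds (by linarith))
    filter_upwards [self_mem_nhdsWithin, hlt] with p hp hp2
    have hp1 : (0 : ℝ) < p - 1 := sub_pos.2 hp
    have hp0 : (0 : ℝ) < p := by linarith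
    have hDp : 0 < D - p := by linarith
    have hle : ((p - 1) / (D - p)) ^ (1 / (p / (p - 1))) ≤ 1 := by
      refine rpow_le_one (by positivity) ?_ (by positivity)
      rw [div_le_one hDp]
      linarith
    rw [monCp, if_neg (ne_of_gt hp), ← hDd]
    have g1 := Gamma_pos_of_pos hD0
    have g2 := Gamma_pos_of_pos (div_pos hD0 hp0)
    have g3 := Gamma_pos_of_pos (div_pos hD0 (div_pos hp0 hp1))
    refine mul_le_mul_of_nonneg_right ?_ (by positivity)
    exact mul_le_of_le_one_right (by positivity) hle

lemma monC1_nonneg (hA : ∀ i, 0 ≤ A i) (hD : 0 < monDim A) : 0 ≤ monC1 A := by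
  have hβ := coneBeta_pos hA
  rw [monC1_eq hA hD]
  positivity

lemma whole_space_sobolev_one (hA : ∀ i, 0 ≤ A i) (hD : 1 < monDim A)
    {u : EuclideanSpace ℝ (Fin n) → ℝ} (hu : ContDiff ℝ 1 u) (hs : HasCompactSupport u) :
    (∫ x, monWeight A x * |u x| ^ (monDim A * 1 / (monDim A - 1))) ^
        ((monDim A - 1) / (monDim A * 1)) ≤
      monC1 A * (∫ x, monWeight A x * ‖fderiv ℝ u x‖ ^ (1 : ℝ)) ^ (1 / (1 : ℝ)) := by
  have hD0 : 0 < monDim A := by linarith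
  obtain ⟨K, hK, hle⟩ := exists_tendsto_monC1_ge_monCp hD (monC1_nonneg hA hD0)
  set D := monDim A
  have hD1 : 0 < D - 1 := by linarith
  have c1 : ContinuousAt (fun p : ℝ => D * p / (D - p)) 1 :=
    (continuousAt_const.mul continuousAt_id).div (continuousAt_const.sub continuousAt_id) hD1.ne'
  have c2 : ContinuousAt (fun p : ℝ => (D - p) / (D * p)) 1 :=
    (continuousAt_const.sub continuousAt_id).div (continuousAt_const.mul continuousAt_id)
      (by positivity)
  have c3 : ContinuousAt (fun p : ℝ => 1 / p) 1 :=
    continuousAt_const.div continuousAt_id one_ne_zero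
  have t1 := (tendsto_integral_monWeight_mul_rpow hA hu.continuous.abs
    (hs.norm : HasCompactSupport fun x => |u x|)
    (show 0 < D * 1 / (D - 1) by positivity)).comp c1.tendsto
  have t2 := tendsto_integral_monWeight_mul_rpow hA (hu.continuous_fderiv one_ne_zero).norm
    (hs.fderiv ℝ).norm one_pos
  have l1 := (t1.rpow c2.tendsto (Or.inr (by positivity))).mono_left
    (nhdsWithin_le_nhds (s := Ioi 1))
  have l2 := hK.mul ((t2.rpow c3.tendsto (Or.inr (by positivity))).mono_left
    (nhdsWithin_le_nhds (s := Ioi 1)))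
  refine le_of_tendsto_of_tendsto l1 l2 ?_
  have hlt : ∀ᶠ p in 𝓝[>] (1 : ℝ), p < D := nhdsWithin_le_nhds (gt_mem_nhds hD)
  filter_upwards [self_mem_nhdsWithin, hlt, hle] with p hp hpD hpK
  refine (whole_space_sobolev hA hp hpD hu hs).trans (mul_le_mul_of_nonneg_right hpK ?_)
  exact rpow_nonneg (integral_nonneg fun x =>
    mul_nonneg (monWeight_nonneg A x) (by positivity)) _

end Endpoint

/-- the Sobolev inequality with monomial weights on the whole space `ℝ^n`. -/
theorem sobolev_monomial_weight_whole_space {n : ℕ} (A : Fin n → ℝ) (hA : ∀ i, 0 ≤ A i)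
    (p : ℝ) (hp1 : 1 ≤ p) (hpD : p < monDim A)
    (u : EuclideanSpace ℝ (Fin n) → ℝ) (hu : ContDiff ℝ 1 u) (hsupp : HasCompactSupport u) :
    (∫ x, monWeight A x * |u x| ^ (monDim A * p / (monDim A - p))) ^
        ((monDim A - p) / (monDim A * p)) ≤
      (if p < monDim A / 2 then 2 ^ (1 / monDim A) * monCp A p else monCp A p) *
        (∫ x, monWeight A x * ‖fderiv ℝ u x‖ ^ p) ^ (1 / p) := by
  have hD : 0 < monDim A := by linarith
  have hmain : (∫ x, monWeight A x * |u x| ^ (monDim A * p / (monDim A - p))) ^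
        ((monDim A - p) / (monDim A * p)) ≤
      monCp A p * (∫ x, monWeight A x * ‖fderiv ℝ u x‖ ^ p) ^ (1 / p) := by
    rcases hp1.eq_or_lt with rfl | hp
    · rw [monCp, if_pos rfl]
      exact whole_space_sobolev_one hA hpD hu hsupp
    · exact whole_space_sobolev hA hp hpD hu hsupp
  have hC : 0 ≤ monCp A p := by
    rcases hp1.eq_or_lt with rfl | hp
    · rw [monCp, if_pos rfl]
      exact monC1_nonneg hA hD
    · exact (monCp_pos hA hp hpD).le
  refine hmain.trans (mul_le_mul_of_nonneg_right ?_ (rpow_nonneg (integral_nonneg fun x =>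
    mul_nonneg (monWeight_nonneg A x) (by positivity)) _))
  split_ifs
  · exact le_mul_of_one_le_left hC (one_le_rpow one_le_two (by positivity))
  · exact le_rfl
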